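/- arXiv:math/0110056 — 7 statements merged into one kernel-verified Lean document; each statement's English description precedes it below -/
import Mathlib

section
/- For all integers n ≥ 0 and k ≥ 0, the number of words in [k]^n avoiding the pattern 111 equals the sum over all integers i with 0 ≤ i ≤ k and n-i ≥ 0 and 2i-n ≥ 0 of C(k,i) · C(i, n-i) · n! / 2^{n-i}. In particular, f_{111}(n,k) = 0 whenever n > 2k. -/
/-- A word `σ ∈ [k]^n` (encoded as `σ : Fin n → Fin k`) contains the pattern `τ`
(encoded as a list of natural numbers) if there is a strictly increasing choice of
positions on which `σ` is order-isomorphic to `τ`. -/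
def WordContains {n k : ℕ} (σ : Fin n → Fin k) (τ : List ℕ) : Prop :=
  ∃ f : Fin τ.length → Fin n, StrictMono f ∧
    ∀ a b : Fin τ.length,
      (σ (f a) < σ (f b) ↔ τ.get a < τ.get b) ∧
      (σ (f a) = σ (f b) ↔ τ.get a = τ.get b)

/-- `avoiders n k T` is the number of words in `[k]^n` that avoid every pattern in `T`,
i.e. `f_T(n,k)`. -/
noncomputable def avoiders (n k : ℕ) (T : Set (List ℕ)) : ℕ :=
  Nat.card {σ : Fin n → Fin k // ∀ τ ∈ T, ¬ WordContains σ τ}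

open Polynomial in
/-- The truncated exponential `1 + X + X^2/2`. -/
noncomputable def truncExp : ℚ[X] := X * (1 + X).comp (C (1/2) * X) + 1

/-- Number of functions all of whose fibres have at most two elements. -/
noncomputable def cnt (α β : Type) : ℕ :=
  Nat.card {σ : α → β // ∀ b, Nat.card {a // σ a = b} ≤ 2}

/-- Extend a word on the complement of `S` by `none` on `S`. -/
noncomputable def extW {α β : Type} (S : Finset α) (τ : {a // a ∉ S} → β) : α → Option β :=
  open Classical in fun a => if h : a ∈ S then none else some (τ ⟨a, h⟩)

lemma extW_none {α β : Type} (S : Finset α) (τ : {a // a ∉ S} → β) (a : α) :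
    extW S τ a = none ↔ a ∈ S := by
  unfold extW; split_ifs with h <;> simp [h]

lemma extW_some {α β : Type} (S : Finset α) (τ : {a // a ∉ S} → β) (a : α) (b : β) :
    extW S τ a = some b ↔ ∃ h : a ∉ S, τ ⟨a, h⟩ = b := by
  unfold extW; split_ifs with h <;> simp [h]

lemma card_none {α β : Type} (S : Finset α) (τ : {a // a ∉ S} → β) :
    Nat.card {a // extW S τ a = none} = S.card := by
  simp only [extW_none]
  simp

lemma card_some {α β : Type} (S : Finset α) (τ : {a // a ∉ S} → β) (b : β) :
    Nat.card {a // extW S τ a = some b} = Nat.card {a // τ a = b} := by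
  simp only [extW_some]
  refine Nat.card_congr
    ⟨fun x => ⟨⟨x.1, x.2.1⟩, x.2.2⟩, fun x => ⟨x.1.1, x.1.2, x.2⟩, fun _ => rfl, fun _ => rfl⟩

lemma extW_ok {α β : Type} (S : Finset α) (τ : {a // a ∉ S} → β) :
    (∀ b, Nat.card {a // extW S τ a = b} ≤ 2) ↔
      S.card ≤ 2 ∧ ∀ b, Nat.card {a // τ a = b} ≤ 2 := by
  rw [Option.forall, card_none]
  simp only [card_some]

lemma cnt_option (α β : Type) [Fintype α] [Fintype β] :
    cnt α (Option β) = ∑ S : Finset α, if S.card ≤ 2 then cnt {a // a ∉ S} β else 0 := by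
  classical
  have h : cnt α (Option β) =
      Nat.card (Σ S : {S : Finset α // S.card ≤ 2},
        {τ : {a // a ∉ S.1} → β // ∀ b, Nat.card {a // τ a = b} ≤ 2}) := by
    symm
    refine Nat.card_eq_of_bijective
      (fun x => ⟨extW x.1.1 x.2.1, (extW_ok _ _).2 ⟨x.1.2, x.2.2⟩⟩) ⟨?_, ?_⟩
    · rintro ⟨⟨S, hS⟩, ⟨τ, hτ⟩⟩ ⟨⟨S', hS'⟩, ⟨τ', hτ'⟩⟩ h
      have h1 : extW S τ = extW S' τ' := congrArg Subtype.val h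
      have h2 : S = S' := by
        ext a
        rw [← extW_none S τ, ← extW_none S' τ', h1]
      subst h2
      have h3 : τ = τ' := by
        funext a
        have := (extW_some S τ a.1 (τ a)).2 ⟨a.2, rfl⟩
        rw [h1, extW_some] at this
        exact this.2.symm
      subst h3
      rfl
    · rintro ⟨σ, hσ⟩
      let S : Finset α := Finset.univ.filter (fun a => σ a = none)
      have hS : ∀ a, a ∉ S → (σ a).isSome := by
        intro a ha
        rw [Option.isSome_iff_ne_none]
        simpa [S] using ha
      let τ : {a // a ∉ S} → β := fun a => (σ a.1).get (hS a.1 a.2)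
      have hE : extW S τ = σ := by
        funext a
        by_cases ha : a ∈ S
        · rw [(extW_none S τ a).2 ha]
          simpa [S, eq_comm] using ha
        · rw [(extW_some S τ a _).2 ⟨ha, rfl⟩]
          simp [τ]
      have hok := (extW_ok S τ).1 (by rw [hE]; exact hσ)
      exact ⟨⟨⟨S, hok.1⟩, ⟨τ, hok.2⟩⟩, Subtype.ext hE⟩
  rw [h, Nat.card_sigma, ← Finset.sum_filter]
  exact (Finset.sum_subtype (Finset.univ.filter (fun S : Finset α => S.card ≤ 2))
    (p := fun S => S.card ≤ 2) (by simp) (fun S => cnt {a // a ∉ S} β)).symm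

lemma truncExp_coeff (m : ℕ) :
    truncExp.coeff m = if m ≤ 2 then (1 / m.factorial : ℚ) else 0 := by
  unfold truncExp
  rcases m with _ | _ | _ | m
  · simp
  · simp [Polynomial.coeff_X, Polynomial.coeff_one]
  · simp [Polynomial.coeff_one]
  · simp [Polynomial.coeff_one, Polynomial.coeff_X, Polynomial.coeff_C]

lemma cnt_congr {α β γ : Type} (e : β ≃ γ) : cnt α β = cnt α γ := by
  refine Nat.card_congr ((Equiv.arrowCongr (Equiv.refl α) e).subtypeEquiv ?_)
  intro σ
  rw [← e.forall_congr_right]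
  simp

lemma cnt_eq (β : Type) [Fintype β] : ∀ (α : Type) [Fintype α],
    (cnt α β : ℚ) = (Fintype.card α).factorial *
      (truncExp ^ (Fintype.card β)).coeff (Fintype.card α) := by
  classical
  refine Fintype.induction_empty_option (P := fun β _ => ∀ (α : Type) [Fintype α],
    (cnt α β : ℚ) = (Fintype.card α).factorial *
      (truncExp ^ (Fintype.card β)).coeff (Fintype.card α)) ?_ ?_ ?_ β
  · intro β γ _ e h α _
    let _ := Fintype.ofEquiv γ e.symm
    rw [← cnt_congr e, h, Fintype.card_congr e]
  · intro α _
    simp only [Fintype.card_pempty, pow_zero, Polynomial.coeff_one]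
    unfold cnt
    split_ifs with h
    · have := Fintype.card_eq_zero_iff.1 h
      have : Nat.card {σ : α → PEmpty.{1} // ∀ b, Nat.card {a // σ a = b} ≤ 2} = 1 := by
        rw [Nat.card_eq_one_iff_unique]
        exact ⟨⟨fun a b => Subtype.ext (Subsingleton.elim _ _)⟩,
          ⟨⟨fun a => isEmptyElim a, fun b => b.elim⟩⟩⟩
      rw [this, h]; simp
    · have : Nonempty α := Fintype.card_pos_iff.1 (Nat.pos_of_ne_zero h)
      simp
  · intro β _ ih α _
    rw [cnt_option]
    push_cast
    have : ∀ S : Finset α, (if S.card ≤ 2 then (cnt {a // a ∉ S} β : ℚ) else 0) =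
        (fun m => if m ≤ 2 then ((Fintype.card α - m).factorial *
          (truncExp ^ (Fintype.card β)).coeff (Fintype.card α - m) : ℚ) else 0) S.card := by
      intro S
      have hc : Fintype.card {a // a ∉ S} = Fintype.card α - S.card := by
        rw [Fintype.card_subtype_compl]; simp
      simp only [ih, hc]
    rw [Finset.sum_congr rfl (fun S _ => this S), ← Finset.powerset_univ,
      Finset.sum_powerset_apply_card (fun m => if m ≤ 2 then ((Fintype.card α - m).factorial *
          (truncExp ^ (Fintype.card β)).coeff (Fintype.card α - m) : ℚ) else 0), Fintype.card_option, pow_succ', Polynomial.coeff_mul,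
      Finset.Nat.sum_antidiagonal_eq_sum_range_succ_mk, Finset.card_univ, Finset.mul_sum]
    refine Finset.sum_congr rfl fun m hm => ?_
    have hm' : m ≤ Fintype.card α := by simpa [Nat.lt_succ_iff] using hm
    simp only [truncExp_coeff]
    split_ifs
    · rw [← Nat.choose_mul_factorial_mul_factorial hm']
      have : (m.factorial : ℚ) ≠ 0 := by positivity
      push_cast
      field_simp
      simp; ring
    · simp

lemma truncExp_pow_coeff (n k : ℕ) : (truncExp ^ k).coeff n =
    ∑ i ∈ Finset.range (k + 1),
      if i ≤ n then (k.choose i * i.choose (n - i) : ℚ) / 2 ^ (n - i) else 0 := by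
  unfold truncExp
  rw [add_pow, Polynomial.finsetSum_coeff]
  refine Finset.sum_congr rfl fun i _ => ?_
  rw [one_pow, mul_one, mul_pow, ← Polynomial.pow_comp, ← Polynomial.C_eq_natCast, Polynomial.coeff_mul_C,
    Polynomial.coeff_X_pow_mul']
  split_ifs
  · rw [Polynomial.comp_C_mul_X_coeff, Polynomial.coeff_one_add_X_pow]
    simp; ring
  · simp

lemma contains_iff {n k : ℕ} (σ : Fin n → Fin k) :
    WordContains σ [1, 1, 1] ↔ ∃ b, 2 < Nat.card {a // σ a = b} := by
  classical
  constructor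
  · rintro ⟨f, hf, h⟩
    refine ⟨σ (f ⟨0, by simp⟩), ?_⟩
    have h1 : ∀ j : Fin [1,1,1].length, [1,1,1].get j = 1 := by decide
    have hi : ∀ i, σ (f i) = σ (f ⟨0, by simp⟩) := fun i => (h i _).2.2 (by rw [h1, h1])
    let g : Fin 3 → {a // σ a = σ (f ⟨0, by simp⟩)} := fun i => ⟨f i, hi i⟩
    have hg : Function.Injective g := fun i j hij =>
      hf.injective (congrArg Subtype.val hij)
    have := Nat.card_le_card_of_injective g hg
    rw [Nat.card_fin] at this
    exact this
  · rintro ⟨b, hb⟩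
    have hc : 3 ≤ (Finset.univ.filter (fun a => σ a = b)).card := by
      rw [Nat.card_eq_fintype_card, Fintype.card_subtype] at hb
      exact hb
    let f := Finset.orderEmbOfCardLe _ hc
    have hf : ∀ i, σ (f i) = b := fun i => by
      have := Finset.orderEmbOfCardLe_mem _ hc i
      simpa using this
    refine ⟨f, f.strictMono, fun x y => ?_⟩
    have : ∀ j : Fin [1,1,1].length, [1,1,1].get j = 1 := by decide
    rw [this, this]
    have hx := hf x
    have hy := hf y
    constructor
    · rw [hx, hy]; simp
    · rw [hx, hy]; simp


/-- f_{111}(n,k) = ∑_{0 ≤ i ≤ k, n-i ≥ 0, 2i-n ≥ 0} C(k,i)·C(i,n-i)·n!/2^{n-i};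
in particular f_{111}(n,k) = 0 when n > 2k. -/
theorem avoid_111_count (n k : ℕ) :
    ((avoiders n k {[1, 1, 1]} : ℚ) =
      ∑ i ∈ Finset.range (k + 1),
        if i ≤ n ∧ n ≤ 2 * i then
          (k.choose i * i.choose (n - i) * n.factorial : ℚ) / 2 ^ (n - i)
        else 0) ∧
    (2 * k < n → avoiders n k {[1, 1, 1]} = 0) := by
  have hA : avoiders n k {[1, 1, 1]} = cnt (Fin n) (Fin k) := by
    unfold avoiders cnt
    simp only [Set.mem_singleton_iff, forall_eq, contains_iff, not_exists, not_lt]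
  have h1 : (avoiders n k {[1, 1, 1]} : ℚ) =
      ∑ i ∈ Finset.range (k + 1),
        if i ≤ n ∧ n ≤ 2 * i then
          (k.choose i * i.choose (n - i) * n.factorial : ℚ) / 2 ^ (n - i)
        else 0 := by
    rw [hA, cnt_eq, Fintype.card_fin, Fintype.card_fin, truncExp_pow_coeff, Finset.mul_sum]
    refine Finset.sum_congr rfl fun i _ => ?_
    by_cases h : i ≤ n
    · by_cases h' : n ≤ 2 * i
      · simp only [h, h', and_self, if_true]; ring
      · have : i.choose (n - i) = 0 := Nat.choose_eq_zero_of_lt (by omega)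
        simp [h', this]
    · simp [h]
  refine ⟨h1, fun h => ?_⟩
  have h2 : (avoiders n k {[1, 1, 1]} : ℚ) = 0 := by
    rw [h1]
    refine Finset.sum_eq_zero fun i hi => if_neg ?_
    have := Finset.mem_range.1 hi
    omega
  exact_mod_cast h2
end

section
/- The patterns 121 and 112 are Wilf-equivalent: for all integers n ≥ 0 and k ≥ 0, the number of words in [k]^n avoiding the pattern 121 equals the number of words in [k]^n avoiding the pattern 112. -/
open List in
theorem strip_left {α : Type*} {a : α} {t w : List α} :
    ∀ {u : List α}, a ∉ u → (a :: t) <+ (u ++ w) → (a :: t) <+ w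
  | [], _, h => by simpa using h
  | b :: u, hu, h => by
    simp only [List.mem_cons, not_or] at hu
    rw [List.cons_append, List.cons_sublist_cons'] at h
    rcases h with h | h
    · exact strip_left hu.2 h
    · exact absurd h.1 hu.1

open List in
theorem strip_right {α : Type*} {a : α} {t w v : List α} (hv : a ∉ v)
    (h : (t ++ [a]) <+ (w ++ v)) : (t ++ [a]) <+ w := by
  have h1 := h.reverse
  simp only [List.reverse_append, List.reverse_cons, List.reverse_nil, List.nil_append,
    List.singleton_append] at h1
  have h2 := strip_left (by simpa using hv) h1
  have h3 := h2.reverse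
  simpa using h3

/-- Lists with letters in `S` that avoid every `g c d`, `c < d`. -/
def Av {α : Type*} [LinearOrder α] (g : α → α → List α) (S : Finset α) : Set (List α) :=
  {L | (∀ x ∈ L, x ∈ S) ∧ ∀ c d, c < d → ¬ List.Sublist (g c d) L}

def g121 {α : Type*} (c d : α) : List α := [c, d, c]
def g112 {α : Type*} (c d : α) : List α := [c, c, d]

def ins121 {α : Type*} (a : α) (L : List α) (i j : ℕ) : List α :=
  L.take i ++ (a :: (List.replicate j a ++ L.drop i))

def ins112 {α : Type*} (a : α) (L : List α) (i j : ℕ) : List α :=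
  L.take i ++ (a :: (L.drop i ++ List.replicate j a))

theorem block_left {α : Type*} (a : α) : ∀ w : List α,
    (∀ b, b ≠ a → ¬ List.Sublist [b, a] w) → ∃ j v, w = List.replicate j a ++ v ∧ a ∉ v
  | [], _ => ⟨0, [], by simp⟩
  | b :: w, h => by
    by_cases hb : b = a
    · subst hb
      obtain ⟨j, v, rfl, hv⟩ := block_left b w (fun c hc h' => h c hc (h'.cons _))
      exact ⟨j + 1, v, by simp [List.replicate_succ], hv⟩
    · refine ⟨0, b :: w, by simp, ?_⟩
      intro hm
      rcases List.mem_cons.1 hm with h1 | h1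
      · exact hb h1.symm
      · exact h b hb (List.Sublist.cons_cons _ (List.singleton_sublist.2 h1))

theorem block_right {α : Type*} (a : α) (w : List α)
    (h : ∀ b, b ≠ a → ¬ List.Sublist [a, b] w) : ∃ j v, w = v ++ List.replicate j a ∧ a ∉ v := by
  obtain ⟨j, v, hw, hv⟩ := block_left a w.reverse (fun b hb h' => h b hb (by simpa using h'.reverse))
  refine ⟨j, v.reverse, ?_, by simpa using hv⟩
  have := congrArg List.reverse hw
  simpa using this

/-- The abstract one-letter step. -/
structure Good {α : Type*} [LinearOrder α] (g : α → α → List α) (a : α) (S : Finset α)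
    (ins : List α → ℕ → ℕ → List α) : Prop where
  len : ∀ L i j, (ins L i j).length = L.length + j + 1
  filt : ∀ L i j, a ∉ L → (ins L i j).filter (fun x => decide (x ≠ a)) = L
  idx : ∀ L i j, a ∉ L → i ≤ L.length → (ins L i j).idxOf a = i
  mem : ∀ L i j x, x ∈ ins L i j → x = a ∨ x ∈ L
  memA : ∀ L i j, a ∈ ins L i j
  av : ∀ L i j, L ∈ Av g S → ins L i j ∈ Av g (insert a S)
  surj : ∀ L, L ∈ Av g (insert a S) → a ∈ L → ∃ L' i j, i ≤ L'.length ∧ a ∉ L' ∧ ins L' i j = L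

theorem good_equiv {α : Type*} [LinearOrder α] {g : α → α → List α} {a : α} {S : Finset α}
    {ins : List α → ℕ → ℕ → List α} (h : Good g a S ins) (haS : a ∉ S) :
    ∃ e : (Av g S ⊕ {p : Av g S × ℕ × ℕ // p.2.1 ≤ p.1.1.length}) ≃ Av g (insert a S),
      (∀ x, (e (Sum.inl x)).1.length = x.1.length) ∧
      (∀ p, (e (Sum.inr p)).1.length = p.1.1.1.length + p.1.2.2 + 1) := by
  have hn : ∀ L ∈ Av g S, a ∉ L := fun L hL hm => haS (hL.1 a hm)
  let F : (Av g S ⊕ {p : Av g S × ℕ × ℕ // p.2.1 ≤ p.1.1.length}) → Av g (insert a S) :=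
    Sum.elim (fun x => ⟨x.1, fun y hy => Finset.mem_insert_of_mem (x.2.1 y hy), x.2.2⟩)
      (fun p => ⟨ins p.1.1.1 p.1.2.1 p.1.2.2, h.av _ _ _ p.1.1.2⟩)
  have hF : Function.Bijective F := by
    constructor
    · rintro (⟨x, hx⟩ | ⟨⟨⟨x, hx⟩, i, j⟩, hi⟩) (⟨y, hy⟩ | ⟨⟨⟨y, hy⟩, i', j'⟩, hi'⟩) hxy
      · have hxy := congrArg Subtype.val hxy
        simp only [F, Sum.elim_inl] at hxy
        subst hxy
        rfl
      · replace hxy := congrArg Subtype.val hxy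
        simp only [F, Sum.elim_inl, Sum.elim_inr] at hxy
        exact absurd (hxy ▸ h.memA y i' j') (hn x hx)
      · replace hxy := congrArg Subtype.val hxy
        simp only [F, Sum.elim_inl, Sum.elim_inr] at hxy
        exact absurd (hxy ▸ h.memA x i j) (hn y hy)
      · replace hxy := congrArg Subtype.val hxy
        simp only [F, Sum.elim_inr] at hxy
        simp only at hi hi'
        have h1 : x = y := by
          rw [← h.filt x i j (hn x hx), hxy, h.filt y i' j' (hn y hy)]
        subst h1
        have h2 : i = i' := by
          rw [← h.idx x i j (hn x hx) hi, hxy, h.idx x i' j' (hn x hx) hi']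
        have h3 : j = j' := by
          have := h.len x i j
          rw [hxy, h.len] at this
          omega
        subst h2 h3
        rfl
    · rintro ⟨L, hL⟩
      by_cases ha : a ∈ L
      · obtain ⟨L', i, j, hi, hL', rfl⟩ := h.surj L hL ha
        have hs : List.Sublist L' (ins L' i j) := by
          conv_lhs => rw [← h.filt L' i j hL']
          exact List.filter_sublist
        have hA : L' ∈ Av g S := by
          refine ⟨fun x hx => ?_, fun c d hcd hg => hL.2 c d hcd (hg.trans hs)⟩
          rcases Finset.mem_insert.1 (hL.1 x (hs.subset hx)) with h1 | h1
          · exact absurd (h1 ▸ hx) hL'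
          · exact h1
        exact ⟨Sum.inr ⟨⟨⟨L', hA⟩, i, j⟩, hi⟩, rfl⟩
      · refine ⟨Sum.inl ⟨L, fun x hx => ?_, hL.2⟩, rfl⟩
        rcases Finset.mem_insert.1 (hL.1 x hx) with h1 | h1
        · exact absurd (h1 ▸ hx) ha
        · exact h1
  refine ⟨Equiv.ofBijective F hF, fun x => rfl, fun p => ?_⟩
  exact h.len _ _ _

theorem filter_ne_self {α : Type*} [DecidableEq α] {a : α} {L : List α} (h : a ∉ L) :
    L.filter (fun x => decide (x ≠ a)) = L := by
  rw [List.filter_eq_self]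
  intro x hx
  simp only [decide_eq_true_eq]
  rintro rfl
  exact h hx

theorem notMem_take {α : Type*} {a : α} {L : List α} (i : ℕ) (h : a ∉ L) : a ∉ L.take i :=
  fun hm => h (List.mem_of_mem_take hm)
theorem notMem_drop {α : Type*} {a : α} {L : List α} (i : ℕ) (h : a ∉ L) : a ∉ L.drop i :=
  fun hm => h (List.mem_of_mem_drop hm)

theorem filt121 {α : Type*} [LinearOrder α] (a : α) (L : List α) (i j : ℕ) (h : a ∉ L) :
    (ins121 a L i j).filter (fun x => decide (x ≠ a)) = L := by
  have h1 := filter_ne_self (notMem_take i h)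
  have h2 := filter_ne_self (notMem_drop i h)
  unfold ins121
  rw [List.filter_append, List.filter_cons, List.filter_append, h1, h2]
  simp

theorem filt112 {α : Type*} [LinearOrder α] (a : α) (L : List α) (i j : ℕ) (h : a ∉ L) :
    (ins112 a L i j).filter (fun x => decide (x ≠ a)) = L := by
  have h1 := filter_ne_self (notMem_take i h)
  have h2 := filter_ne_self (notMem_drop i h)
  unfold ins112
  rw [List.filter_append, List.filter_cons, List.filter_append, h1, h2]
  simp

theorem mem121 {α : Type*} (a : α) (L : List α) (i j : ℕ) (x : α) (h : x ∈ ins121 a L i j) :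
    x = a ∨ x ∈ L := by
  simp only [ins121, List.mem_append, List.mem_cons, List.mem_replicate] at h
  rcases h with h | h | h | h
  · exact Or.inr (List.mem_of_mem_take h)
  · exact Or.inl h
  · exact Or.inl h.2
  · exact Or.inr (List.mem_of_mem_drop h)

theorem mem112 {α : Type*} (a : α) (L : List α) (i j : ℕ) (x : α) (h : x ∈ ins112 a L i j) :
    x = a ∨ x ∈ L := by
  simp only [ins112, List.mem_append, List.mem_cons, List.mem_replicate] at h
  rcases h with h | h | h | h
  · exact Or.inr (List.mem_of_mem_take h)
  · exact Or.inl h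
  · exact Or.inr (List.mem_of_mem_drop h)
  · exact Or.inl h.2

theorem good121 {α : Type*} [LinearOrder α] (a : α) (S : Finset α) (hS : ∀ x ∈ S, a < x) :
    Good g121 a S (ins121 a) where
  len L i j := by simp [ins121]; omega
  filt := filt121 a
  idx L i j h hi := by
    rw [ins121, List.idxOf_append_of_notMem (notMem_take i h)]
    simp [hi]
  mem := mem121 a
  memA L i j := by simp [ins121]
  av L i j hL := by
    have ha : a ∉ L := fun hm => lt_irrefl _ (hS a (hL.1 a hm))
    refine ⟨fun x hx => ?_, fun c d hcd hg => ?_⟩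
    · rcases mem121 a L i j x hx with h | h
      · simp [h]
      · exact Finset.mem_insert_of_mem (hL.1 x h)
    · have hc : a ≤ c := by
        rcases mem121 a L i j c (hg.subset (by simp [g121])) with h | h
        · exact h.ge
        · exact (hS c (hL.1 c h)).le
      have hd : d ≠ a := (hc.trans_lt hcd).ne'
      rcases hc.eq_or_lt with rfl | hc
      · have h1 := strip_left (notMem_take i ha) hg
        rw [← List.cons_append] at h1
        have h2 := strip_right (t := [a, d]) (notMem_drop i ha) h1
        have h3 : d ∈ a :: List.replicate j a := h2.subset (by simp)
        simp [hd] at h3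
      · have := hg.filter (fun x => decide (x ≠ a))
        rw [filt121 a L i j ha] at this
        apply hL.2 c d hcd
        simpa [g121, hc.ne', hd] using this
  surj L hL ha := by
    obtain ⟨u, w, rfl, hu⟩ := List.eq_append_cons_of_mem ha
    obtain ⟨j, v, rfl, hv⟩ := block_left a w (fun b hb h => by
      have hbw : b ∈ w := h.subset (by simp)
      have hab : a < b := by
        rcases Finset.mem_insert.1 (hL.1 b (by simp [hbw])) with h1 | h1
        · exact absurd h1 hb
        · exact hS b h1
      exact hL.2 a b hab ((List.Sublist.cons_cons a h).trans (List.sublist_append_right _ _)))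
    exact ⟨u ++ v, u.length, j, by simp, by simp [hu, hv], by simp [ins121]⟩

theorem good112 {α : Type*} [LinearOrder α] (a : α) (S : Finset α) (hS : ∀ x ∈ S, a < x) :
    Good g112 a S (ins112 a) where
  len L i j := by simp [ins112]; omega
  filt := filt112 a
  idx L i j h hi := by
    rw [ins112, List.idxOf_append_of_notMem (notMem_take i h)]
    simp [hi]
  mem := mem112 a
  memA L i j := by simp [ins112]
  av L i j hL := by
    have ha : a ∉ L := fun hm => lt_irrefl _ (hS a (hL.1 a hm))
    refine ⟨fun x hx => ?_, fun c d hcd hg => ?_⟩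
    · rcases mem112 a L i j x hx with h | h
      · simp [h]
      · exact Finset.mem_insert_of_mem (hL.1 x h)
    · have hc : a ≤ c := by
        rcases mem112 a L i j c (hg.subset (by simp [g112])) with h | h
        · exact h.ge
        · exact (hS c (hL.1 c h)).le
      have hd : d ≠ a := (hc.trans_lt hcd).ne'
      rcases hc.eq_or_lt with rfl | hc
      · have h1 := strip_left (notMem_take i ha) hg
        have h2 := strip_left (notMem_drop i ha) (List.cons_sublist_cons.1 h1)
        have h3 : d ∈ List.replicate j a := h2.subset (by simp)
        simp [hd] at h3
      · have := hg.filter (fun x => decide (x ≠ a))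
        rw [filt112 a L i j ha] at this
        apply hL.2 c d hcd
        simpa [g112, hc.ne', hd] using this
  surj L hL ha := by
    obtain ⟨u, w, rfl, hu⟩ := List.eq_append_cons_of_mem ha
    obtain ⟨j, v, rfl, hv⟩ := block_right a w (fun b hb h => by
      have hbw : b ∈ w := h.subset (by simp)
      have hab : a < b := by
        rcases Finset.mem_insert.1 (hL.1 b (by simp [hbw])) with h1 | h1
        · exact absurd h1 hb
        · exact hS b h1
      exact hL.2 a b hab ((List.Sublist.cons_cons a h).trans (List.sublist_append_right _ _)))
    exact ⟨u ++ v, u.length, j, by simp, by simp [hu, hv], by simp [ins112]⟩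

theorem main_equiv {α : Type*} [LinearOrder α] (S : Finset α) :
    ∃ e : Av (α := α) g121 S ≃ Av (α := α) g112 S, ∀ x, (e x).1.length = x.1.length := by
  induction S using Finset.induction_on_min with
  | empty =>
    have key : ∀ g : α → α → List α, (∀ c d, g c d ≠ []) → Av g ∅ = {[]} := by
      intro g hg
      ext L
      constructor
      · intro h
        exact List.eq_nil_iff_forall_not_mem.2 (fun x hx => by simpa using h.1 x hx)
      · rintro rfl
        exact ⟨by simp, fun c d _ h => hg c d (List.sublist_nil.1 h)⟩
    have h : Av (α := α) g121 ∅ = Av (α := α) g112 ∅ := by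
      rw [key g121 (by simp [g121]), key g112 (by simp [g112])]
    exact ⟨Equiv.setCongr h, fun x => rfl⟩
  | insert a S hS ih =>
    obtain ⟨e, he⟩ := ih
    have haS : a ∉ S := fun h => lt_irrefl _ (hS a h)
    obtain ⟨e1, h1, h1'⟩ := good_equiv (good121 a S hS) haS
    obtain ⟨e2, h2, h2'⟩ := good_equiv (good112 a S hS) haS
    let m : {p : Av (α := α) g121 S × ℕ × ℕ // p.2.1 ≤ p.1.1.length} ≃
        {p : Av (α := α) g112 S × ℕ × ℕ // p.2.1 ≤ p.1.1.length} :=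
      (e.prodCongr (Equiv.refl (ℕ × ℕ))).subtypeEquiv (fun p => by simp [he])
    refine ⟨e1.symm.trans ((e.sumCongr m).trans e2), fun x => ?_⟩
    obtain ⟨y, rfl⟩ := e1.surjective x
    rcases y with y | y
    · simp [h1, h2, he]
    · simp [h1', h2', m, he]

theorem contains_iff_s4 {n k : ℕ} (σ : Fin n → Fin k) (τ : List ℕ) (g : Fin k → Fin k → List (Fin k))
    (h1 : ∀ c d, c < d → ∃ φ : ℕ → Fin k, g c d = τ.map φ ∧ φ 1 = c ∧ φ 2 = d)
    (h2 : ∀ φ : ℕ → Fin k, g (φ 1) (φ 2) = τ.map φ)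
    (hτ : ∀ x, x ∈ τ ↔ x = 1 ∨ x = 2) :
    WordContains σ τ ↔ ∃ c d, c < d ∧ List.Sublist (g c d) (List.ofFn σ) := by
  constructor
  · rintro ⟨f, hf, h⟩
    obtain ⟨p, hp⟩ := List.get_of_mem ((hτ 1).2 (Or.inl rfl))
    obtain ⟨q, hq⟩ := List.get_of_mem ((hτ 2).2 (Or.inr rfl))
    refine ⟨σ (f p), σ (f q), (h p q).1.2 (by rw [hp, hq]; norm_num), ?_⟩
    have hg := h2 (fun x => if x = 1 then σ (f p) else σ (f q))
    simp only [if_true, show (2 : ℕ) ≠ 1 by norm_num, if_false] at hg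
    have : g (σ (f p)) (σ (f q)) = List.ofFn (fun i => σ (f i)) := by
      rw [hg]
      apply List.ext_get (by simp)
      intro i hi hi'
      have hi0 : i < τ.length := by simpa using hi
      have hmem := (hτ _).1 (List.get_mem τ ⟨i, hi0⟩)
      simp only [List.get_eq_getElem, List.getElem_map, List.getElem_ofFn]
      rcases hmem with hm | hm
      · have := (h p ⟨i, hi0⟩).2.2 (by rw [hp, hm])
        simp only [List.get_eq_getElem] at hm
        simp [hm, this]
      · have := (h q ⟨i, hi0⟩).2.2 (by rw [hq, hm])
        simp only [List.get_eq_getElem] at hm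
        simp [hm, this]
    rw [this, List.sublist_iff_exists_fin_orderEmbedding_get_eq]
    refine ⟨OrderEmbedding.ofStrictMono
      (fun i => Fin.cast (by simp) (f (Fin.cast (by simp) i))) ?_, ?_⟩
    · intro i j hij
      exact hf hij
    · intro i
      simp
      rfl
  · rintro ⟨c, d, hcd, hs⟩
    obtain ⟨φ, hφ, rfl, rfl⟩ := h1 c d hcd
    rw [hφ, List.sublist_iff_exists_fin_orderEmbedding_get_eq] at hs
    obtain ⟨f, hf⟩ := hs
    have hv : ∀ a : Fin τ.length,
        σ (Fin.cast (by simp) (f (Fin.cast (by simp) a))) = φ (τ.get a) := by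
      intro a
      have := hf (Fin.cast (by simp) a)
      simp at this
      simp [this]
      rfl
    refine ⟨fun a => Fin.cast (by simp) (f (Fin.cast (by simp) a)), ?_, ?_⟩
    · intro i j hij
      exact f.strictMono (show Fin.cast _ i < Fin.cast _ j from hij)
    · intro a b
      simp only [hv]
      have ha := (hτ _).1 (List.get_mem τ a)
      have hb := (hτ _).1 (List.get_mem τ b)
      rcases ha with ha | ha <;> rcases hb with hb | hb <;>
        simp only [ha, hb] <;> simp [hcd, hcd.ne, hcd.ne', hcd.le]

theorem avoiders_eq (n k : ℕ) (τ : List ℕ) (g : Fin k → Fin k → List (Fin k))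
    (h : ∀ σ : Fin n → Fin k,
      WordContains σ τ ↔ ∃ c d, c < d ∧ List.Sublist (g c d) (List.ofFn σ)) :
    avoiders n k {τ} = Nat.card {L : Av g Finset.univ // L.1.length = n} := by
  unfold avoiders
  have hA : ∀ σ : Fin n → Fin k, (∀ t ∈ ({τ} : Set (List ℕ)), ¬ WordContains σ t) ↔
      List.ofFn σ ∈ Av g Finset.univ := by
    intro σ
    simp [Av, h]
  refine Nat.card_congr (Equiv.ofBijective
    (fun σ => ⟨⟨List.ofFn σ.1, (hA σ.1).1 σ.2⟩, by simp⟩) ⟨?_, ?_⟩)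
  · intro σ σ' hs
    simp only [Subtype.mk.injEq] at hs
    exact Subtype.ext (List.ofFn_injective hs)
  · rintro ⟨⟨L, hL⟩, hn⟩
    simp only at hn
    subst hn
    exact ⟨⟨L.get, (hA _).2 (by rwa [List.ofFn_get])⟩, by simp⟩

/-- The patterns 121 and 112 are Wilf-equivalent. -/
theorem avoid_121_eq_avoid_112 (n k : ℕ) :
    avoiders n k {[1, 2, 1]} = avoiders n k {[1, 1, 2]} := by
  rw [avoiders_eq n k [1, 2, 1] g121 (fun σ => contains_iff_s4 σ _ _
      (fun c d _ => ⟨fun x => if x = 1 then c else d, by simp [g121]⟩)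
      (fun φ => by simp [g121]) (by intro x; simp; try tauto)),
    avoiders_eq n k [1, 1, 2] g112 (fun σ => contains_iff_s4 σ _ _
      (fun c d _ => ⟨fun x => if x = 1 then c else d, by simp [g112]⟩)
      (fun φ => by simp [g112]) (by intro x; simp; try tauto))]
  obtain ⟨e, he⟩ := main_equiv (Finset.univ : Finset (Fin k))
  exact Nat.card_congr (e.subtypeEquiv (fun L => by rw [he]))
end

section
/- For all integers n ≥ 0 and k ≥ 0, the number of words in [k]^n avoiding the pattern 112 equals ∑_{j=0}^{k} C(n+k-j-1, n) · c(n, n-j), where c(n,m) denotes the signless Stirling number of the first kind, i.e., the number of permutations of {1,...,n} with exactly m right-to-left minima (equivalently, with exactly m cycles). The same formula holds for the pattern 121. -/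
/-- The number of right-to-left minima of a permutation of `{1,…,n}`:
positions `r` such that `π r < π s` for all `s > r`. -/
def rlMinCount {n : ℕ} (π : Equiv.Perm (Fin n)) : ℕ :=
  (Finset.univ.filter (fun r : Fin n => ∀ s, r < s → π r < π s)).card

/-- The signless Stirling number of the first kind `c(n,m)`: the number of
permutations of `{1,…,n}` with exactly `m` right-to-left minima. -/
noncomputable def stirC (n m : ℕ) : ℕ :=
  Nat.card {π : Equiv.Perm (Fin n) // rlMinCount π = m}

def Av112 {n k : ℕ} (σ : Fin n → Fin k) : Prop :=
  ∀ i j l, i < j → j < l → σ i = σ j → ¬ σ j < σ l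

def Av121 {n k : ℕ} (σ : Fin n → Fin k) : Prop :=
  ∀ i j l, i < j → j < l → σ i = σ l → ¬ σ i < σ j

lemma not_contains_112 {n k : ℕ} (σ : Fin n → Fin k) :
    (¬ WordContains σ [1, 1, 2]) ↔ Av112 σ := by
  rw [← not_iff_not, not_not]
  unfold Av112
  push Not
  constructor
  · rintro ⟨f, hf, h⟩
    have h1 := (h (0 : Fin 3) (1 : Fin 3)).2
    have h2 := (h (1 : Fin 3) (2 : Fin 3)).1
    exact ⟨f (0 : Fin 3), f (1 : Fin 3), f (2 : Fin 3), hf (by decide : (0 : Fin 3) < 1),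
      hf (by decide : (1 : Fin 3) < 2), h1.2 rfl, h2.2 (by decide)⟩
  · rintro ⟨i, j, l, hij, hjl, e, hlt⟩
    refine ⟨(![i, j, l] : Fin 3 → Fin n), ?_, ?_⟩
    · show StrictMono (![i, j, l] : Fin 3 → Fin n)
      rw [Fin.strictMono_iff_lt_succ]
      intro a
      fin_cases a
      · exact hij
      · exact hjl
    · show ∀ a b : Fin 3, _
      intro a b
      fin_cases a <;> fin_cases b <;> simp [e, hlt, hlt.ne, hlt.ne', hlt.le]

lemma not_contains_121 {n k : ℕ} (σ : Fin n → Fin k) :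
    (¬ WordContains σ [1, 2, 1]) ↔ Av121 σ := by
  rw [← not_iff_not, not_not]
  unfold Av121
  push Not
  constructor
  · rintro ⟨f, hf, h⟩
    have h1 := (h (0 : Fin 3) (2 : Fin 3)).2
    have h2 := (h (0 : Fin 3) (1 : Fin 3)).1
    exact ⟨f (0 : Fin 3), f (1 : Fin 3), f (2 : Fin 3), hf (by decide : (0 : Fin 3) < 1),
      hf (by decide : (1 : Fin 3) < 2), h1.2 rfl, h2.2 (by decide)⟩
  · rintro ⟨i, j, l, hij, hjl, e, hlt⟩
    rw [e] at hlt
    refine ⟨(![i, j, l] : Fin 3 → Fin n), ?_, ?_⟩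
    · show StrictMono (![i, j, l] : Fin 3 → Fin n)
      rw [Fin.strictMono_iff_lt_succ]
      intro a
      fin_cases a
      · exact hij
      · exact hjl
    · show ∀ a b : Fin 3, _
      intro a b
      fin_cases a <;> fin_cases b <;> simp [e, hlt, hlt.ne, hlt.ne', hlt.le]

def insW {n k : ℕ} (p : Fin (n + 1)) (w : Fin n → Fin (k + 1)) : Fin (n + 1) → Fin (k + 1) :=
  Fin.insertNth (α := fun _ => Fin (k + 1)) p 0 w

@[simp] lemma insW_self {n k : ℕ} (p : Fin (n + 1)) (w : Fin n → Fin (k + 1)) :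
    insW p w p = 0 := by simp [insW]

@[simp] lemma insW_succAbove {n k : ℕ} (p : Fin (n + 1)) (w : Fin n → Fin (k + 1)) (i : Fin n) :
    insW p w (p.succAbove i) = w i := by simp [insW]

lemma insW_remove {n k : ℕ} (p : Fin (n + 1)) (σ : Fin (n + 1) → Fin (k + 1)) (h : σ p = 0) :
    insW p (fun i => σ (p.succAbove i)) = σ := by
  funext q
  rcases Fin.eq_self_or_eq_succAbove p q with rfl | ⟨x, rfl⟩
  · simp [h]
  · simp

lemma insW_inj {n k : ℕ} (p : Fin (n + 1)) (w w' : Fin n → Fin (k + 1))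
    (h : insW p w = insW p w') : w = w' := by
  funext i
  rw [← insW_succAbove p w i, h, insW_succAbove]

def HasZ {n k : ℕ} (σ : Fin n → Fin (k + 1)) : Prop := ∃ q, σ q = 0

def UZ {n k : ℕ} (σ : Fin (n + 1) → Fin (k + 1)) : Prop :=
  ∃ p : Fin n, σ p.castSucc = 0 ∧ ∀ q, q ≠ p.castSucc → σ q ≠ 0

/-- Counting recurrence for a pattern class `P`. -/
lemma card_rec (P : ∀ n k : ℕ, (Fin n → Fin k) → Prop) (n k : ℕ)
    (h1 : ∀ τ : Fin (n + 1) → Fin k, P (n + 1) (k + 1) (fun i => (τ i).succ) ↔ P (n + 1) k τ)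
    (h2 : ∀ (p : Fin (n + 1)) (τ : Fin n → Fin k),
      P (n + 1) (k + 1) (insW p (fun i => (τ i).succ)) ↔ P n k τ)
    (h3 : Nat.card {w : Fin n → Fin (k + 1) // P n (k + 1) w} =
      Nat.card {σ : Fin (n + 1) → Fin (k + 1) // P _ _ σ ∧ HasZ σ ∧ ¬ UZ σ}) :
    Nat.card {σ // P (n + 1) (k + 1) σ} =
      Nat.card {σ // P (n + 1) k σ} + Nat.card {σ // P n (k + 1) σ}
        + n * Nat.card {σ // P n k σ} := by
  classical
  have hlift : ∀ (m : ℕ) (σ : Fin m → Fin (k + 1)), (∀ i, σ i ≠ 0) →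
      ∃ τ : Fin m → Fin k, σ = fun i => (τ i).succ := by
    intro m σ h
    refine ⟨fun i => (σ i).pred (h i), ?_⟩
    funext i
    simp
  have a1 : Nat.card {σ // P (n + 1) k σ} =
      Nat.card {σ : Fin (n + 1) → Fin (k + 1) // P _ _ σ ∧ ¬ HasZ σ} := by
    refine Nat.card_congr (Equiv.ofBijective
      (fun τ => ⟨fun i => (τ.1 i).succ, (h1 _).2 τ.2, ?_⟩) ⟨?_, ?_⟩)
    · rintro ⟨q, hq⟩
      exact Fin.succ_ne_zero _ hq
    · rintro ⟨τ, _⟩ ⟨τ', _⟩ h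
      simp only [Subtype.mk.injEq] at h ⊢
      funext i
      exact Fin.succ_injective _ (congrFun h i)
    · rintro ⟨σ, hP, hz⟩
      obtain ⟨τ, rfl⟩ := hlift _ σ (fun i hi => hz ⟨i, hi⟩)
      exact ⟨⟨τ, (h1 _).1 hP⟩, rfl⟩
  have a2 : n * Nat.card {σ // P n k σ} =
      Nat.card {σ : Fin (n + 1) → Fin (k + 1) // P _ _ σ ∧ UZ σ} := by
    have : n * Nat.card {σ // P n k σ} = Nat.card (Fin n × {σ // P n k σ}) := by
      simp [Nat.card_prod]
    rw [this]
    have key : ∀ (p : Fin n) (τ : Fin n → Fin k) (q : Fin (n + 1)),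
        insW p.castSucc (fun i => (τ i).succ) q = 0 → q = p.castSucc := by
      intro p τ q hq
      rcases Fin.eq_self_or_eq_succAbove p.castSucc q with h | ⟨x, rfl⟩
      · exact h
      · simp at hq
    refine Nat.card_congr (Equiv.ofBijective
      (fun x => ⟨insW x.1.castSucc (fun i => (x.2.1 i).succ), (h2 _ _).2 x.2.2,
        ⟨x.1, by simp, fun q hq h => hq (key _ _ _ h)⟩⟩) ⟨?_, ?_⟩)
    · rintro ⟨p, τ, _⟩ ⟨p', τ', _⟩ h
      simp only [Subtype.mk.injEq] at h
      have hp : p = p' := by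
        have := key p' τ' p.castSucc (by rw [← h]; simp)
        exact Fin.castSucc_injective _ this
      subst hp
      have h' := insW_inj _ _ _ h
      have : τ = τ' := by
        funext i
        exact Fin.succ_injective _ (congrFun h' i)
      subst this
      rfl
    · rintro ⟨σ, hP, p, hp, hq⟩
      obtain ⟨τ, hτ⟩ := hlift _ (fun i => σ (p.castSucc.succAbove i))
        (fun i => hq _ (Fin.succAbove_ne _ _))
      have e := insW_remove p.castSucc σ hp
      rw [hτ] at e
      refine ⟨⟨p, τ, ?_⟩, ?_⟩
      · rw [← h2 p.castSucc, e]; exact hP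
      · simp only [e]
  rw [a1, a2, h3]
  simp only [Nat.card_eq_fintype_card, Fintype.card_subtype]
  rw [← Finset.card_union_of_disjoint, ← Finset.card_union_of_disjoint]
  · congr 1
    ext σ
    have : UZ σ → HasZ σ := fun ⟨p, hp, _⟩ => ⟨_, hp⟩
    simp only [Finset.mem_union, Finset.mem_filter, Finset.mem_univ, true_and]
    tauto
  · rw [Finset.disjoint_left]
    intro σ
    have : UZ σ → HasZ σ := fun ⟨p, hp, _⟩ => ⟨_, hp⟩
    simp only [Finset.mem_union, Finset.mem_filter, Finset.mem_univ, true_and]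
    tauto
  · rw [Finset.disjoint_left]
    intro σ
    simp only [Finset.mem_filter, Finset.mem_univ, true_and]
    tauto

lemma av112_sub {n k : ℕ} (p : Fin (n + 1)) (σ : Fin (n + 1) → Fin k) (h : Av112 σ) :
    Av112 (fun i => σ (p.succAbove i)) := fun i j l hij hjl =>
  h _ _ _ (Fin.strictMono_succAbove p hij) (Fin.strictMono_succAbove p hjl)

lemma av121_sub {n k : ℕ} (p : Fin (n + 1)) (σ : Fin (n + 1) → Fin k) (h : Av121 σ) :
    Av121 (fun i => σ (p.succAbove i)) := fun i j l hij hjl =>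
  h _ _ _ (Fin.strictMono_succAbove p hij) (Fin.strictMono_succAbove p hjl)

lemma rec112 (n k : ℕ) :
    Nat.card {σ : Fin (n + 1) → Fin (k + 1) // Av112 σ} =
      Nat.card {σ : Fin (n + 1) → Fin k // Av112 σ} + Nat.card {σ : Fin n → Fin (k + 1) // Av112 σ}
        + n * Nat.card {σ : Fin n → Fin k // Av112 σ} := by
  apply card_rec (fun n k σ => Av112 σ)
  · intro τ
    simp [Av112]
  · intro p τ
    constructor
    · intro h
      have := av112_sub p _ h
      simpa [Av112] using this
    · intro h i j l hij hjl e hlt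
      rcases Fin.eq_self_or_eq_succAbove p l with hl | ⟨l, rfl⟩
      · rw [hl, insW_self] at hlt
        exact Fin.not_lt_zero _ hlt
      rcases Fin.eq_self_or_eq_succAbove p i with hi | ⟨i, rfl⟩ <;>
      rcases Fin.eq_self_or_eq_succAbove p j with hj | ⟨j, rfl⟩
      · exact hij.ne (hi.trans hj.symm)
      · rw [hi, insW_self, insW_succAbove] at e
        exact Fin.succ_ne_zero _ e.symm
      · rw [hj, insW_self, insW_succAbove] at e
        exact Fin.succ_ne_zero _ e
      · simp at e hlt hij hjl
        exact h _ _ _ hij hjl e hlt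
  · have key : ∀ w : Fin n → Fin (k + 1), Av112 w → Av112 (insW (Fin.last n) w) := by
      intro w h i j l hij hjl e hlt
      rcases Fin.eq_self_or_eq_succAbove (Fin.last n) l with rfl | ⟨l, rfl⟩
      · simp at hlt
      rcases Fin.eq_self_or_eq_succAbove (Fin.last n) j with rfl | ⟨j, rfl⟩
      · exact absurd hjl (not_lt.2 (Fin.le_last _))
      rcases Fin.eq_self_or_eq_succAbove (Fin.last n) i with rfl | ⟨i, rfl⟩
      · exact absurd hij (not_lt.2 (Fin.le_last _))
      rw [insW_succAbove, insW_succAbove] at e hlt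
      exact h _ _ _ ((Fin.strictMono_succAbove _).lt_iff_lt.1 hij)
        ((Fin.strictMono_succAbove _).lt_iff_lt.1 hjl) e hlt
    refine Nat.card_congr (Equiv.ofBijective
      (fun w => ⟨insW (Fin.last n) w.1, key _ w.2, ⟨_, insW_self _ _⟩, ?_⟩) ⟨?_, ?_⟩)
    · rintro ⟨p, _, h⟩
      exact h (Fin.last n) (Fin.castSucc_lt_last p).ne' (insW_self _ _)
    · rintro ⟨w, _⟩ ⟨w', _⟩ h
      simp only [Subtype.mk.injEq] at h ⊢
      exact insW_inj _ _ _ h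
    · rintro ⟨σ, hA, ⟨q, hq⟩, hU⟩
      have hl : σ (Fin.last n) = 0 := by
        by_contra hne
        apply hU
        obtain ⟨p, rfl⟩ | rfl := Fin.eq_castSucc_or_eq_last q
        · refine ⟨p, hq, fun q hqp hz => ?_⟩
          have hql : q < Fin.last n := Fin.lt_last_iff_ne_last.2 (fun h => hne (h ▸ hz))
          rcases lt_or_gt_of_ne hqp with h | h
          · exact hA _ _ _ h (Fin.castSucc_lt_last p) (hz.trans hq.symm)
              (by rw [hq]; exact Fin.pos_of_ne_zero hne)
          · exact hA _ _ _ h hql (hq.trans hz.symm)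
              (by rw [hz]; exact Fin.pos_of_ne_zero hne)
        · exact absurd hq hne
      refine ⟨⟨_, av112_sub (Fin.last n) σ hA⟩, ?_⟩
      simp only [insW_remove _ _ hl]

def IsIns {n k : ℕ} (w : Fin n → Fin (k + 1)) (p : Fin (n + 1)) : Prop :=
  (∀ q : Fin n, w q = 0 → p ≤ q.castSucc) ∧
    (p = Fin.last n ∨ ∃ q : Fin n, p = q.castSucc ∧ w q = 0)

lemma exists_least {n k : ℕ} (w : Fin n → Fin (k + 1)) (h : HasZ w) :
    ∃ p, w p = 0 ∧ ∀ q, w q = 0 → p ≤ q := by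
  classical
  obtain ⟨q, hq⟩ := h
  have hne : (Finset.univ.filter (fun q => w q = 0)).Nonempty := ⟨q, by simp [hq]⟩
  refine ⟨Finset.min' _ hne, ?_, fun q hq => Finset.min'_le _ q (by simp [hq])⟩
  have := Finset.min'_mem _ hne
  simpa using this

lemma exists_isIns {n k : ℕ} (w : Fin n → Fin (k + 1)) : ∃ p, IsIns w p := by
  by_cases h : HasZ w
  · obtain ⟨p, hp, hl⟩ := exists_least w h
    exact ⟨p.castSucc, fun q hq => Fin.castSucc_le_castSucc_iff.2 (hl q hq),
      Or.inr ⟨p, rfl, hp⟩⟩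
  · exact ⟨Fin.last n, fun q hq => absurd ⟨q, hq⟩ h, Or.inl rfl⟩

lemma IsIns.le {n k : ℕ} {w : Fin n → Fin (k + 1)} {p p' : Fin (n + 1)}
    (h : IsIns w p) (h' : IsIns w p') : p ≤ p' := by
  rcases h'.2 with rfl | ⟨q, rfl, hq⟩
  · exact Fin.le_last _
  · exact h.1 q hq

lemma IsIns.least {n k : ℕ} {w : Fin n → Fin (k + 1)} {p : Fin (n + 1)}
    (h : IsIns w p) (q : Fin (n + 1)) (hq : insW p w q = 0) : p ≤ q := by
  rcases Fin.eq_self_or_eq_succAbove p q with rfl | ⟨x, rfl⟩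
  · exact le_rfl
  · rw [insW_succAbove] at hq
    have := h.1 x hq
    rw [Fin.succAbove_of_le_castSucc _ _ this]
    exact this.trans (Fin.castSucc_lt_succ).le

lemma rec121 (n k : ℕ) :
    Nat.card {σ : Fin (n + 1) → Fin (k + 1) // Av121 σ} =
      Nat.card {σ : Fin (n + 1) → Fin k // Av121 σ} + Nat.card {σ : Fin n → Fin (k + 1) // Av121 σ}
        + n * Nat.card {σ : Fin n → Fin k // Av121 σ} := by
  apply card_rec (fun n k σ => Av121 σ)
  · intro τ
    simp [Av121]
  · intro p τ
    constructor
    · intro h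
      have := av121_sub p _ h
      simpa [Av121] using this
    · intro h i j l hij hjl e hlt
      rcases Fin.eq_self_or_eq_succAbove p j with hj | ⟨j, rfl⟩
      · rw [hj, insW_self] at hlt
        exact Fin.not_lt_zero _ hlt
      rcases Fin.eq_self_or_eq_succAbove p i with hi | ⟨i, rfl⟩ <;>
      rcases Fin.eq_self_or_eq_succAbove p l with hl | ⟨l, rfl⟩
      · exact (hij.trans hjl).ne (hi.trans hl.symm)
      · rw [hi, insW_self, insW_succAbove] at e
        exact Fin.succ_ne_zero _ e.symm
      · rw [hl, insW_self, insW_succAbove] at e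
        exact Fin.succ_ne_zero _ e
      · simp at e hlt hij hjl
        exact h _ _ _ hij hjl e hlt
  · choose ins hins using (fun w : Fin n → Fin (k + 1) => exists_isIns w)
    have key : ∀ w : Fin n → Fin (k + 1), Av121 w → Av121 (insW (ins w) w) := by
      intro w h i j l hij hjl e hlt
      have H := hins w
      generalize ins w = p at *
      rcases Fin.eq_self_or_eq_succAbove p j with rfl | ⟨j, rfl⟩
      · simp at hlt
      rcases Fin.eq_self_or_eq_succAbove p l with rfl | ⟨l, rfl⟩
      · rw [insW_self] at e
        exact absurd (hij.trans hjl) (not_lt.2 (H.least _ e))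
      have hjl' := (Fin.strictMono_succAbove _).lt_iff_lt.1 hjl
      rcases Fin.eq_self_or_eq_succAbove p i with rfl | ⟨i, rfl⟩
      · rw [insW_self, insW_succAbove] at e hlt
        rcases H.2 with rfl | ⟨q, rfl, hq⟩
        · exact absurd hij (not_lt.2 (Fin.le_last _))
        · have hqj : q ≠ j := by
            rintro rfl
            rw [hq] at hlt
            exact lt_irrefl _ hlt
          have hqj' : q < j := by
            by_contra hc
            have hjq : j < q := lt_of_le_of_ne (not_lt.1 hc) hqj.symm
            rw [Fin.succAbove_of_castSucc_lt _ _ (Fin.castSucc_lt_castSucc_iff.2 hjq)] at hij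
            exact absurd (Fin.castSucc_lt_castSucc_iff.1 hij) (not_lt.2 hjq.le)
          exact h _ _ _ hqj' hjl' (hq.trans e) (by rw [hq]; exact hlt)
      · rw [insW_succAbove, insW_succAbove] at e hlt
        exact h _ _ _ ((Fin.strictMono_succAbove _).lt_iff_lt.1 hij) hjl' e hlt
    refine Nat.card_congr (Equiv.ofBijective
      (fun w => ⟨insW (ins w.1) w.1, key _ w.2, ⟨_, insW_self _ _⟩, ?_⟩) ⟨?_, ?_⟩)
    · rintro ⟨r, hr, hu⟩
      have hpr : ins w.1 = r.castSucc := by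
        by_contra hc
        exact hu _ hc (insW_self _ _)
      rcases (hins w.1).2 with h | ⟨q, h, hq⟩
      · exact (Fin.castSucc_lt_last r).ne (hpr.symm.trans h)
      · refine hu ((ins w.1).succAbove q) ?_ (by rw [insW_succAbove, hq])
        rw [← hpr]
        exact Fin.succAbove_ne _ _
    · rintro ⟨w, _⟩ ⟨w', _⟩ h
      simp only [Subtype.mk.injEq] at h ⊢
      have hp : ins w = ins w' := le_antisymm
        ((hins w).least _ (by rw [h]; simp)) ((hins w').least _ (by rw [← h]; simp))
      rw [hp] at h
      exact insW_inj _ _ _ h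
    · rintro ⟨σ, hA, hz, hU⟩
      obtain ⟨p, hp, hl⟩ := exists_least σ hz
      have hI : IsIns (fun i => σ (p.succAbove i)) p := by
        refine ⟨fun q hq => ?_, ?_⟩
        · by_contra hc
          have hc := not_le.1 hc
          have h1 := hl _ hq
          rw [Fin.succAbove_of_castSucc_lt _ _ hc] at h1
          exact absurd hc (not_lt.2 h1)
        · obtain ⟨q, rfl⟩ | h := Fin.eq_castSucc_or_eq_last p
          · right
            refine ⟨q, rfl, ?_⟩
            by_contra hne
            apply hU
            refine ⟨q, hp, fun r hr hr0 => ?_⟩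
            have hlt : q.castSucc < r := lt_of_le_of_ne (hl r hr0) hr.symm
            simp only [Fin.succAbove_castSucc_self] at hne
            have hsr : q.succ ≠ r := by
              rintro rfl
              exact hne hr0
            have hle : q.succ ≤ r := Fin.castSucc_lt_iff_succ_le.1 hlt
            exact hA _ _ _ Fin.castSucc_lt_succ (lt_of_le_of_ne hle hsr) (hp.trans hr0.symm)
              (by rw [hp]; exact Fin.pos_of_ne_zero hne)
          · exact Or.inl h
      have e : ins (fun i => σ (p.succAbove i)) = p :=
        le_antisymm ((hins _).le hI) (hI.le (hins _))
      refine ⟨⟨_, av121_sub p σ hA⟩, ?_⟩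
      simp only [e, insW_remove _ _ hp]

/-! Stirling numbers -/

def consPerm {n : ℕ} (p : Fin (n + 1)) (σ : Equiv.Perm (Fin n)) : Equiv.Perm (Fin (n + 1)) :=
  ((finSuccEquiv' 0).trans (Equiv.optionCongr σ)).trans (finSuccEquiv' p).symm

@[simp] lemma consPerm_zero {n : ℕ} (p : Fin (n + 1)) (σ : Equiv.Perm (Fin n)) :
    consPerm p σ 0 = p := by
  simp [consPerm]

@[simp] lemma consPerm_succ {n : ℕ} (p : Fin (n + 1)) (σ : Equiv.Perm (Fin n)) (i : Fin n) :
    consPerm p σ i.succ = p.succAbove (σ i) := by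
  have : finSuccEquiv' (0 : Fin (n + 1)) i.succ = some i := by
    rw [← Fin.succAbove_zero_apply, finSuccEquiv'_succAbove]
  simp [consPerm, this]

lemma consPerm_bij (n : ℕ) :
    Function.Bijective (fun x : Fin (n + 1) × Equiv.Perm (Fin n) => consPerm x.1 x.2) := by
  rw [Fintype.bijective_iff_injective_and_card]
  constructor
  · rintro ⟨p, σ⟩ ⟨p', σ'⟩ h
    simp only at h
    have hp : p = p' := by simpa using congrArg (fun f => f 0) h
    subst hp
    have : σ = σ' := by
      ext1 i
      have := congrArg (fun f => f i.succ) h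
      simpa using this
    rw [this]
  · simp [Fintype.card_perm, Nat.factorial_succ]

lemma rlMinCount_cons {n : ℕ} (p : Fin (n + 1)) (σ : Equiv.Perm (Fin n)) :
    rlMinCount (consPerm p σ) = rlMinCount σ + if p = 0 then 1 else 0 := by
  unfold rlMinCount
  rw [Finset.card_filter, Finset.card_filter, Fin.sum_univ_succ, add_comm]
  have h0 : (∀ s, (0 : Fin (n + 1)) < s → consPerm p σ 0 < consPerm p σ s) ↔ p = 0 := by
    constructor
    · intro h
      by_contra hp
      obtain ⟨x, hx⟩ := Fin.exists_succAbove_eq (Ne.symm hp)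
      have := h (σ.symm x).succ (Fin.succ_pos _)
      simp [hx] at this
    · rintro rfl s hs
      obtain ⟨i, rfl⟩ := Fin.exists_succ_eq.2 hs.ne'
      simp
  have h1 : ∀ i : Fin n, (∀ s, i.succ < s → consPerm p σ i.succ < consPerm p σ s) ↔
      ∀ s, i < s → σ i < σ s := by
    intro i
    rw [Fin.forall_fin_succ]
    simp [(Fin.strictMono_succAbove p).lt_iff_lt]
  simp only [h0, h1]

lemma stirC_eq_sum (n m : ℕ) :
    stirC (n + 1) m = Nat.card {σ : Equiv.Perm (Fin n) // rlMinCount σ + 1 = m}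
      + n * stirC n m := by
  classical
  have e : stirC (n + 1) m = Nat.card {x : Fin (n + 1) × Equiv.Perm (Fin n) //
      rlMinCount x.2 + (if x.1 = 0 then 1 else 0) = m} := by
    symm
    refine Nat.card_congr ((Equiv.ofBijective _ (consPerm_bij n)).subtypeEquiv ?_)
    intro x
    simp [rlMinCount_cons]
  rw [e]
  unfold stirC
  simp only [Nat.card_eq_fintype_card, Fintype.card_subtype, Finset.card_filter]
  rw [Fintype.sum_prod_type, Fin.sum_univ_succ]
  simp [Fin.succ_ne_zero]

lemma stirC_succ (n m : ℕ) : stirC (n + 1) (m + 1) = stirC n m + n * stirC n (m + 1) := by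
  rw [stirC_eq_sum]
  simp [stirC]

lemma stirC_succ_zero (n : ℕ) : stirC (n + 1) 0 = n * stirC n 0 := by
  rw [stirC_eq_sum]
  simp

lemma stirC_zero_zero : stirC 0 0 = 1 := by
  simp [stirC, rlMinCount]

lemma stirC_succ_zero' (n : ℕ) : stirC (n + 1) 0 = 0 := by
  induction n with
  | zero => simp [stirC_succ_zero]
  | succ n ih => rw [stirC_succ_zero, ih, mul_zero]

lemma stirC_self_succ (n : ℕ) : stirC n (n + 1) = 0 := by
  unfold stirC
  have : IsEmpty {π : Equiv.Perm (Fin n) // rlMinCount π = n + 1} := by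
    constructor
    rintro ⟨π, h⟩
    have : rlMinCount π ≤ n := by
      unfold rlMinCount
      simpa using Finset.card_filter_le (Finset.univ : Finset (Fin n))
        (fun r : Fin n => ∀ s, r < s → π r < π s)
    omega
  simp

noncomputable def dS (n j : ℕ) : ℕ := if j ≤ n then stirC n (n - j) else 0

lemma dS_zero (n : ℕ) : dS (n + 1) 0 = dS n 0 := by
  simp [dS, stirC_succ, stirC_self_succ]

lemma dS_succ (n j : ℕ) : dS (n + 1) (j + 1) = dS n (j + 1) + n * dS n j := by
  unfold dS
  rcases lt_trichotomy j n with h | rfl | h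
  · rw [if_pos (by omega), if_pos (by omega), if_pos (by omega)]
    obtain ⟨m, rfl⟩ : ∃ m, n = j + 1 + m := ⟨n - j - 1, by omega⟩
    rw [show j + 1 + m + 1 - (j + 1) = m + 1 by omega, show j + 1 + m - (j + 1) = m by omega,
      show j + 1 + m - j = m + 1 by omega, stirC_succ]
  · simp [stirC_succ_zero]
  · rw [if_neg (by omega), if_neg (by omega), if_neg (by omega)]
    simp

noncomputable def RS (n k : ℕ) : ℕ :=
  ∑ j ∈ Finset.range (k + 1), (n + k - j - 1).choose n * dS n j

lemma RS_zero (k : ℕ) : RS 0 k = 1 := by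
  unfold RS
  rw [Finset.sum_range_succ']
  simp [dS, stirC_zero_zero]

lemma RS_succ_zero (n : ℕ) : RS (n + 1) 0 = 0 := by
  simp [RS]

lemma RS_drop (n k : ℕ) :
    RS (n + 1) k = ∑ j ∈ Finset.range k, (n + k - j).choose (n + 1) * dS (n + 1) j := by
  unfold RS
  rw [Finset.sum_range_succ, show n + 1 + k - k - 1 = n by omega, Nat.choose_succ_self, zero_mul,
    add_zero]
  refine Finset.sum_congr rfl fun j hj => ?_
  rw [show n + 1 + k - j - 1 = n + k - j by omega]

lemma RS_drop' (n k : ℕ) :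
    RS n (k + 1) = ∑ j ∈ Finset.range (k + 1), (n + k - j).choose n * dS n j := by
  unfold RS
  rw [Finset.sum_range_succ]
  have : (n + (k + 1) - (k + 1) - 1).choose n * dS n (k + 1) = 0 := by
    cases n with
    | zero => simp [dS]
    | succ n => simp
  rw [this, add_zero]
  refine Finset.sum_congr rfl fun j hj => ?_
  rw [show n + (k + 1) - j - 1 = n + k - j by omega]

lemma RS_rec (n k : ℕ) :
    RS (n + 1) (k + 1) = RS (n + 1) k + RS n (k + 1) + n * RS n k := by
  have e1 : RS (n + 1) k =
      ∑ j ∈ Finset.range (k + 1), (n + k - j).choose (n + 1) * dS (n + 1) j := by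
    rw [RS_drop, Finset.sum_range_succ, show n + k - k = n by omega, Nat.choose_succ_self,
      zero_mul, add_zero]
  have e2 : RS (n + 1) (k + 1) = RS (n + 1) k +
      ∑ j ∈ Finset.range (k + 1), (n + k - j).choose n * dS (n + 1) j := by
    rw [RS_drop, e1, ← Finset.sum_add_distrib]
    refine Finset.sum_congr rfl fun j hj => ?_
    have := Finset.mem_range.1 hj
    rw [show n + (k + 1) - j = n + k - j + 1 by omega, Nat.choose_succ_succ]
    ring
  have e4 : n * RS n k = n * ∑ j ∈ Finset.range k, (n + k - j - 1).choose n * dS n j := by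
    cases n with
    | zero => simp
    | succ n =>
      rw [RS_drop]
      congr 1
      refine Finset.sum_congr rfl fun j hj => ?_
      rw [show n + 1 + k - j - 1 = n + k - j by omega]
  rw [e2, add_assoc, RS_drop', e4, Finset.sum_range_succ', Finset.sum_range_succ' _ k, dS_zero,
    Finset.mul_sum]
  have : ∀ j, (n + k - (j + 1)).choose n * dS (n + 1) (j + 1) =
      (n + k - (j + 1)).choose n * dS n (j + 1) + n * ((n + k - j - 1).choose n * dS n j) := by
    intro j
    rw [dS_succ, show n + k - (j + 1) = n + k - j - 1 by omega]
    ring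
  simp only [this, Finset.sum_add_distrib]
  ring

lemma eq_RS (F : ℕ → ℕ → ℕ) (h0 : ∀ k, F 0 k = 1) (h1 : ∀ n, F (n + 1) 0 = 0)
    (hr : ∀ n k, F (n + 1) (k + 1) = F (n + 1) k + F n (k + 1) + n * F n k) (n k : ℕ) :
    F n k = RS n k := by
  induction n generalizing k with
  | zero => rw [h0, RS_zero]
  | succ n ih =>
    induction k with
    | zero => rw [h1, RS_succ_zero]
    | succ k ihk => rw [hr, RS_rec, ihk, ih, ih]

lemma RS_eq (n k : ℕ) : RS n k = ∑ j ∈ Finset.range (k + 1),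
    if j ≤ n then (n + k - j - 1).choose n * stirC n (n - j) else 0 := by
  unfold RS dS
  refine Finset.sum_congr rfl fun j _ => ?_
  split_ifs <;> simp

/-- f_{112}(n,k) = f_{121}(n,k) = ∑_{j=0}^{k} C(n+k-j-1, n)·c(n, n-j),
where terms with n - j < 0 are taken to be 0. -/
theorem avoid_112_formula (n k : ℕ) :
    avoiders n k {[1, 1, 2]} =
      (∑ j ∈ Finset.range (k + 1),
        if j ≤ n then (n + k - j - 1).choose n * stirC n (n - j) else 0) ∧
    avoiders n k {[1, 2, 1]} =
      (∑ j ∈ Finset.range (k + 1),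
        if j ≤ n then (n + k - j - 1).choose n * stirC n (n - j) else 0) := by
  rw [← RS_eq]
  have a1 : ∀ n k, avoiders n k {[1, 1, 2]} = Nat.card {σ : Fin n → Fin k // Av112 σ} := by
    intro n k
    simp only [avoiders, Set.mem_singleton_iff, forall_eq, not_contains_112]
  have a2 : ∀ n k, avoiders n k {[1, 2, 1]} = Nat.card {σ : Fin n → Fin k // Av121 σ} := by
    intro n k
    simp only [avoiders, Set.mem_singleton_iff, forall_eq, not_contains_121]
  rw [a1, a2]
  constructor
  · refine eq_RS (fun n k => Nat.card {σ : Fin n → Fin k // Av112 σ}) ?_ ?_ rec112 n k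
    · intro k
      simp [Av112]
    · intro n
      simp
  · refine eq_RS (fun n k => Nat.card {σ : Fin n → Fin k // Av121 σ}) ?_ ?_ rec121 n k
    · intro k
      simp [Av121]
    · intro n
      simp
end

section
/- The pairs of patterns {111,112} and {111,121} are Wilf-equivalent: for all integers n ≥ 0 and k ≥ 0, the number of words in [k]^n avoiding both 111 and 112 equals the number of words in [k]^n avoiding both 111 and 121. -/
/-- `badT b x y z`: the forbidden triples. For `b = true`: `111` or `112`;
for `b = false`: `111` or `121`. -/
def badT (b : Bool) {α : Type} [LinearOrder α] (x y z : α) : Prop :=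
  if b then x = y ∧ y ≤ z else x = z ∧ x ≤ y

/-- Good words on an arbitrary linear order of positions. -/
def GoodW (b : Bool) {ι : Type} [LinearOrder ι] {k : ℕ} (σ : ι → Fin k) : Prop :=
  ∀ i j l : ι, i < j → j < l → ¬ badT b (σ i) (σ j) (σ l)

/-- Allowed sets of positions of the smallest letter. -/
def AllowS (b : Bool) {ι : Type} [LinearOrder ι] (S : Finset ι) : Prop :=
  ∀ i j l : ι, i < j → j < l → ¬ (i ∈ S ∧ (if b then j ∈ S else l ∈ S))

noncomputable def cntW (b : Bool) (ι : Type) [LinearOrder ι] (k : ℕ) : ℕ :=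
  Nat.card {σ : ι → Fin k // GoodW b σ}

theorem cntW_congr (b : Bool) {ι κ : Type} [LinearOrder ι] [LinearOrder κ] (e : ι ≃o κ) (k : ℕ) :
    cntW b ι k = cntW b κ k := by
  refine Nat.card_congr ((Equiv.arrowCongr e.toEquiv (Equiv.refl _)).subtypeEquiv ?_)
  intro σ
  constructor
  · intro h i j l hij hjl
    exact h _ _ _ (e.symm.lt_iff_lt.2 hij) (e.symm.lt_iff_lt.2 hjl)
  · intro h i j l hij hjl
    have := h _ _ _ (e.lt_iff_lt.2 hij) (e.lt_iff_lt.2 hjl)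
    simpa using this

theorem cntW_fin (b : Bool) (ι : Type) [LinearOrder ι] [Fintype ι] (k m : ℕ)
    (h : Fintype.card ι = m) : cntW b ι k = cntW b (Fin m) k :=
  cntW_congr b (Fintype.orderIsoFinOfCardEq ι h).symm k

theorem good_iff (b : Bool) {ι : Type} [LinearOrder ι] {k : ℕ} (S : Finset ι)
    (σ : ι → Fin (k+1)) (hS : ∀ i, i ∈ S ↔ σ i = 0) :
    GoodW b σ ↔ AllowS b S ∧
      GoodW b (fun i : {i // i ∉ S} => (σ i).pred (fun h => i.2 ((hS i).2 h))) := by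
  constructor
  · intro h
    constructor
    · intro i j l hij hjl hb
      apply h i j l hij hjl
      cases b <;> simp only [hS, badT, if_true, if_false, Bool.false_eq_true] at hb ⊢ <;>
        simp [hb.1, hb.2]
    · rintro ⟨i, hi⟩ ⟨j, hj⟩ ⟨l, hl⟩ hij hjl hb
      apply h i j l hij hjl
      cases b <;> simpa [badT] using hb
  · rintro ⟨hA, hG⟩ i j l hij hjl hb
    have hA' := hA i j l hij hjl
    by_cases hi : i ∈ S
    · apply hA'
      have h0 := (hS i).1 hi
      cases b <;> simp only [hS, badT, if_true, if_false, Bool.false_eq_true] at hb ⊢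
      · exact ⟨h0, by rw [← hb.1, h0]⟩
      · exact ⟨h0, by rw [← hb.1, h0]⟩
    · have h0 : σ i ≠ 0 := fun h => hi ((hS i).2 h)
      have hj : j ∉ S := by
        rw [hS]; intro hj
        cases b <;> simp only [badT, if_true, if_false, Bool.false_eq_true] at hb
        · rw [hj] at hb; exact h0 (by simpa using hb.2)
        · exact h0 (hb.1.trans hj)
      have hl : l ∉ S := by
        rw [hS]; intro hl
        cases b <;> simp only [badT, if_true, if_false, Bool.false_eq_true] at hb
        · exact h0 (hb.1.trans hl)
        · rw [hl] at hb; exact h0 (hb.1.trans (by simpa using hb.2))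
      apply hG ⟨i, hi⟩ ⟨j, hj⟩ ⟨l, hl⟩ hij hjl
      cases b <;> simpa [badT] using hb

open Classical in
theorem card_fiber (b : Bool) {ι : Type} [LinearOrder ι] [Fintype ι] {k : ℕ} (S : Finset ι) :
    Nat.card {σ : {σ : ι → Fin (k+1) // GoodW b σ} //
      Finset.univ.filter (fun i => σ.1 i = 0) = S} =
    if AllowS b S then cntW b {i // i ∉ S} k else 0 := by
  have key : ∀ σ : ι → Fin (k+1), Finset.univ.filter (fun i => σ i = 0) = S ↔
      ∀ i, i ∈ S ↔ σ i = 0 := by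
    intro σ
    constructor
    · rintro rfl i; simp
    · intro h; ext i; simp [h]
  split_ifs with hA
  · have key2 : ∀ τ : {i // i ∉ S} → Fin k, ∀ i, i ∈ S ↔
        (if h : i ∈ S then (0 : Fin (k+1)) else (τ ⟨i, h⟩).succ) = 0 := by
      intro τ i
      by_cases h : i ∈ S <;> simp [h]
    refine Nat.card_congr
      { toFun := fun σ => ⟨_, ((good_iff b S σ.1.1 ((key _).1 σ.2)).1 σ.1.2).2⟩
        invFun := fun τ => ⟨⟨fun i => if h : i ∈ S then 0 else (τ.1 ⟨i, h⟩).succ, ?_⟩, ?_⟩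
        left_inv := ?_
        right_inv := ?_ }
    · rw [good_iff b S _ (key2 τ.1)]
      refine ⟨hA, ?_⟩
      convert τ.2 using 1
      funext i
      simp [i.2]
    · exact (key _).2 (key2 τ.1)
    · rintro ⟨⟨σ, h1⟩, h2⟩
      apply Subtype.ext
      apply Subtype.ext
      funext i
      have := ((key _).1 h2) i
      by_cases h : i ∈ S
      · simpa [h, eq_comm] using this
      · simp [h]
    · rintro ⟨τ, h⟩
      apply Subtype.ext
      funext i
      simp [i.2]
  · rw [Nat.card_eq_zero]
    left
    constructor
    rintro ⟨⟨σ, h1⟩, h2⟩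
    exact hA ((good_iff b S σ ((key _).1 h2)).1 h1).1

open Classical in
theorem cntW_succ (b : Bool) (n k : ℕ) :
    cntW b (Fin n) (k+1) =
      ∑ S : Finset (Fin n), if AllowS b S then cntW b (Fin (n - S.card)) k else 0 := by
  unfold cntW
  rw [← Nat.card_congr (Equiv.sigmaFiberEquiv
    (fun σ : {σ : Fin n → Fin (k+1) // GoodW b σ} => Finset.univ.filter (fun i => σ.1 i = 0))),
    Nat.card_sigma]
  refine Finset.sum_congr rfl fun S _ => ?_
  rw [card_fiber]
  split_ifs
  · exact cntW_fin b _ k _ (by simp [Fintype.card_subtype_compl])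
  · rfl

/-- The allowed two-element sets. -/
def pairS (b : Bool) {m : ℕ} (a : Fin m) : Finset (Fin (m+1)) :=
  {a.castSucc, if b then Fin.last m else a.succ}

theorem pairS_card (b : Bool) {m : ℕ} (a : Fin m) : (pairS b a).card = 2 := by
  unfold pairS
  rw [Finset.card_pair]
  cases b
  · simp [Fin.ext_iff]
  · simp [Fin.ext_iff]; omega

theorem pairS_inj (b : Bool) {m : ℕ} : Function.Injective (pairS b (m := m)) := by
  intro a c h
  have h1 : a.castSucc ∈ pairS b c := by rw [← h]; simp [pairS]
  have h2 : c.castSucc ∈ pairS b a := by rw [h]; simp [pairS]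
  cases b <;> simp [pairS, Fin.ext_iff] at h1 h2 <;> ext <;> omega

theorem allow_iff (b : Bool) {m : ℕ} (S : Finset (Fin (m+1))) :
    AllowS b S ↔ S.card ≤ 1 ∨ ∃ a, pairS b a = S := by
  constructor
  · intro h
    by_contra! hc
    obtain ⟨hc, hp⟩ := hc
    obtain ⟨x, hx, y, hy, hxy⟩ := Finset.one_lt_card.1 hc
    wlog hlt : x < y generalizing x y
    · exact this y hy x hx hxy.symm (lt_of_le_of_ne (not_lt.1 hlt) hxy.symm)
    have hxm : x.val < m := by have := y.2; have : x.val < y.val := hlt; omega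
    have hbig : (if b then Fin.last m else (⟨x, hxm⟩ : Fin m).succ) = y := by
      cases b
      · by_contra hne
        refine h x (⟨x, hxm⟩ : Fin m).succ y ?_ ?_ ⟨hx, by simpa using hy⟩
        · simp [Fin.lt_def]
        · simp [-Fin.val_fin_lt, Fin.lt_def, Fin.ext_iff] at hne hlt ⊢; omega
      · by_contra hne
        refine h x y (Fin.last m) hlt ?_ ⟨hx, by simpa using hy⟩
        simp [-Fin.val_fin_lt, Fin.lt_def, Fin.ext_iff] at hne hlt ⊢; omega
    apply hp ⟨x, hxm⟩
    unfold pairS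
    rw [hbig]
    ext z
    simp only [Finset.mem_insert, Finset.mem_singleton]
    constructor
    · rintro (rfl | rfl)
      · exact hx
      · exact hy
    · intro hz
      by_contra! hzz
      have hzx : z.val ≠ x.val := fun e => hzz.1 (Fin.ext e)
      have hzy : z.val ≠ y.val := fun e => hzz.2 (Fin.ext e)
      have hlt' : x.val < y.val := hlt
      have H : ∀ i j l : Fin (m+1), i.val < j.val → j.val < l.val → i ∈ S → j ∈ S → l ∈ S → False := by
        intro i j l h1 h2 hi hj hl
        refine h i j l h1 h2 ⟨hi, ?_⟩
        cases b <;> simpa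
      rcases lt_or_gt_of_ne hzx with h1 | h1
      · exact H z x y h1 hlt' hz hx hy
      · rcases lt_or_gt_of_ne hzy with h2 | h2
        · exact H x z y h1 h2 hx hz hy
        · exact H x y z hlt' h2 hx hy hz
  · rintro (h | ⟨a, rfl⟩)
    · intro i j l hij hjl ⟨hi, hj⟩
      have h1 := Finset.card_le_one.1 h
      cases b
      · exact absurd (h1 i hi l (by simpa using hj)) (hij.trans hjl).ne
      · exact absurd (h1 i hi j (by simpa using hj)) hij.ne
    · intro i j l hij hjl ⟨hi, hj⟩
      have := l.2
      cases b <;> simp [-Fin.val_fin_lt, pairS, Fin.ext_iff, Fin.lt_def] at hi hj hij hjl <;> omega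

open Classical in
theorem sum_allow (b : Bool) (m : ℕ) (g : ℕ → ℕ) :
    (∑ S : Finset (Fin (m+1)), if AllowS b S then g S.card else 0) =
      (∑ S : Finset (Fin (m+1)) with S.card ≤ 1, g S.card) + m * g 2 := by
  rw [← Finset.sum_filter]
  have : (Finset.univ.filter (fun S : Finset (Fin (m+1)) => AllowS b S)) =
      Finset.univ.filter (fun S : Finset (Fin (m+1)) => S.card ≤ 1) ∪
        Finset.univ.image (pairS b (m := m)) := by
    ext S
    simp [allow_iff]
  rw [this, Finset.sum_union, Finset.sum_image (fun a _ c _ h => pairS_inj b h)]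
  · simp [pairS_card]
  · rw [Finset.disjoint_left]
    intro S hS hS'
    simp only [Finset.mem_filter, Finset.mem_image, Finset.mem_univ, true_and] at hS hS'
    obtain ⟨a, rfl⟩ := hS'
    rw [pairS_card] at hS
    omega

theorem cntW_eq (k : ℕ) : ∀ n : ℕ, cntW true (Fin n) k = cntW false (Fin n) k := by
  have h0 : ∀ k, cntW true (Fin 0) k = cntW false (Fin 0) k := by
    intro k
    refine Nat.card_congr (Equiv.subtypeEquivRight fun σ => ?_)
    exact ⟨fun _ i => i.elim0, fun _ i => i.elim0⟩
  induction k with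
  | zero =>
    intro n
    cases n with
    | zero => exact h0 0
    | succ n =>
      refine Nat.card_congr (Equiv.subtypeEquivRight fun σ => ?_)
      exact (σ 0).elim0
  | succ k ih =>
    intro n
    cases n with
    | zero => exact h0 _
    | succ m =>
      rw [cntW_succ, cntW_succ, sum_allow true m (fun j => cntW true (Fin (m + 1 - j)) k),
        sum_allow false m (fun j => cntW false (Fin (m + 1 - j)) k)]
      simp only [ih]

theorem contains_iff_s8 {n k : ℕ} (σ : Fin n → Fin k) (x y z : ℕ) :
    WordContains σ [x, y, z] ↔ ∃ i j l : Fin n, i < j ∧ j < l ∧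
      ((σ i < σ j ↔ x < y) ∧ (σ j < σ i ↔ y < x)) ∧
      ((σ i < σ l ↔ x < z) ∧ (σ l < σ i ↔ z < x)) ∧
      ((σ j < σ l ↔ y < z) ∧ (σ l < σ j ↔ z < y)) := by
  constructor
  · rintro ⟨f, hf, h⟩
    refine ⟨f 0, f 1, f 2, hf ?_, hf ?_, ⟨(h 0 1).1, (h 1 0).1⟩, ⟨(h 0 2).1, (h 2 0).1⟩,
      ⟨(h 1 2).1, (h 2 1).1⟩⟩ <;> simp [Fin.lt_def]
  · rintro ⟨i, j, l, hij, hjl, ⟨h1, h2⟩, ⟨h3, h4⟩, ⟨h5, h6⟩⟩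
    have hil := hij.trans hjl
    refine ⟨![i, j, l], ?_, ?_⟩
    · intro a b hab
      change Fin 3 at a b
      fin_cases a <;> fin_cases b <;> simp_all
    · intro a b
      change Fin 3 at a b
      rw [Fin.ext_iff]
      simp only [Fin.lt_def] at *
      fin_cases a <;> fin_cases b <;> simp <;> omega

theorem good_true {n k : ℕ} (σ : Fin n → Fin k) :
    (∀ τ ∈ ({[1, 1, 1], [1, 1, 2]} : Set (List ℕ)), ¬ WordContains σ τ) ↔ GoodW true σ := by
  simp only [Set.mem_insert_iff, Set.mem_singleton_iff, forall_eq_or_imp, forall_eq, contains_iff_s8]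
  constructor
  · rintro ⟨h1, h2⟩ i j l hij hjl hb
    simp only [badT, if_true] at hb
    rcases hb.2.lt_or_eq with h | h
    · exact h2 ⟨i, j, l, hij, hjl, by simp [hb.1, h, h.le]⟩
    · exact h1 ⟨i, j, l, hij, hjl, by simp [hb.1, h]⟩
  · intro h
    constructor <;>
    · rintro ⟨i, j, l, hij, hjl, h1⟩
      apply h i j l hij hjl
      simp only [badT, if_true, Fin.lt_def, Fin.le_def, Fin.ext_iff] at *
      omega

theorem good_false {n k : ℕ} (σ : Fin n → Fin k) :
    (∀ τ ∈ ({[1, 1, 1], [1, 2, 1]} : Set (List ℕ)), ¬ WordContains σ τ) ↔ GoodW false σ := by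
  simp only [Set.mem_insert_iff, Set.mem_singleton_iff, forall_eq_or_imp, forall_eq, contains_iff_s8]
  constructor
  · rintro ⟨h1, h2⟩ i j l hij hjl hb
    simp only [badT, if_false, Bool.false_eq_true] at hb
    rcases hb.2.lt_or_eq with h | h
    · exact h2 ⟨i, j, l, hij, hjl, by simp [← hb.1, h, h.le]⟩
    · exact h1 ⟨i, j, l, hij, hjl, by simp [← hb.1, ← h]⟩
  · intro h
    constructor <;>
    · rintro ⟨i, j, l, hij, hjl, h1⟩
      apply h i j l hij hjl
      simp only [badT, if_false, Bool.false_eq_true, Fin.lt_def, Fin.le_def, Fin.ext_iff] at *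
      omega

/-- The pairs {111,112} and {111,121} are Wilf-equivalent. -/
theorem avoid_111_112_eq_avoid_111_121 (n k : ℕ) :
    avoiders n k {[1, 1, 1], [1, 1, 2]} = avoiders n k {[1, 1, 1], [1, 2, 1]} := by
  unfold avoiders
  rw [Nat.card_congr (Equiv.subtypeEquivRight good_true),
    Nat.card_congr (Equiv.subtypeEquivRight good_false)]
  exact cntW_eq k n
end

section
/- For all integers n ≥ 2 and k ≥ 1, the numbers f_{111,112}(n,k) of words in [k]^n avoiding both patterns 111 and 112 satisfy the recurrence f_{111,112}(n,k) = f_{111,112}(n,k-1) + n · f_{111,112}(n-1,k-1) + (n-1) · f_{111,112}(n-2,k-1). -/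
/-- Every letter after a repeated letter is smaller than it. -/
def GoodWord {n k : ℕ} (σ : Fin n → Fin k) : Prop :=
  ∀ i j l : Fin n, i < j → j < l → σ i = σ j → σ l < σ i

lemma good_iff_s10 {n k : ℕ} (σ : Fin n → Fin k) :
    (∀ τ ∈ ({[1, 1, 1], [1, 1, 2]} : Set (List ℕ)), ¬ WordContains σ τ) ↔ GoodWord σ := by
  simp only [Set.mem_insert_iff, Set.mem_singleton_iff, forall_eq_or_imp, forall_eq]
  constructor
  · rintro ⟨h1, h2⟩ i j l hij hjl e
    by_contra hl
    have hmono : StrictMono (![i, j, l] : Fin 3 → Fin n) := by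
      rw [Fin.strictMono_iff_lt_succ]
      intro a
      fin_cases a
      · exact hij
      · exact hjl
    rcases lt_or_eq_of_le (not_lt.mp hl) with h | h
    · apply h2
      refine ⟨(![i, j, l] : Fin 3 → Fin n), hmono, ?_⟩
      have h' := h
      rw [e] at h'
      intro (a : Fin 3) (b : Fin 3)
      fin_cases a <;> fin_cases b <;> simp [e, h', h'.le, h'.ne, h'.ne']
    · apply h1
      refine ⟨(![i, j, l] : Fin 3 → Fin n), hmono, ?_⟩
      rw [e] at h
      intro (a : Fin 3) (b : Fin 3)
      fin_cases a <;> fin_cases b <;> simp [e, h]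
  · intro h
    constructor
    · rintro ⟨f, hf, hh⟩
      have h01 := hf (show (⟨0, by simp⟩ : Fin [1, 1, 1].length) < ⟨1, by simp⟩ by simp)
      have h12 := hf (show (⟨1, by simp⟩ : Fin [1, 1, 1].length) < ⟨2, by simp⟩ by simp)
      have e1 := (hh ⟨0, by simp⟩ ⟨1, by simp⟩).2.2 (by simp)
      have e2 := (hh ⟨0, by simp⟩ ⟨2, by simp⟩).2.2 (by simp)
      exact (h _ _ _ h01 h12 e1).ne e2.symm
    · rintro ⟨f, hf, hh⟩
      have h01 := hf (show (⟨0, by simp⟩ : Fin [1, 1, 2].length) < ⟨1, by simp⟩ by simp)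
      have h12 := hf (show (⟨1, by simp⟩ : Fin [1, 1, 2].length) < ⟨2, by simp⟩ by simp)
      have e1 := (hh ⟨0, by simp⟩ ⟨1, by simp⟩).2.2 (by simp)
      have e2 := (hh ⟨0, by simp⟩ ⟨2, by simp⟩).1.2 (by simp)
      exact (h _ _ _ h01 h12 e1).asymm e2

/-- Words avoiding both patterns. -/
abbrev GW (n k : ℕ) := {σ : Fin n → Fin k // GoodWord σ}

lemma avoiders_eq_s10 (n k : ℕ) : avoiders n k {[1, 1, 1], [1, 1, 2]} = Nat.card (GW n k) := by
  unfold avoiders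
  exact Nat.card_congr (Equiv.subtypeEquivRight fun σ => good_iff_s10 σ)

/-- Raise all letters by one. -/
def up {n k : ℕ} (τ : Fin n → Fin k) : Fin n → Fin (k + 1) := fun i => (τ i).succ

/-- Raise all letters and insert one smallest letter at `p`. -/
def ins1 {n k : ℕ} (p : Fin (n + 1)) (τ : Fin n → Fin k) : Fin (n + 1) → Fin (k + 1) :=
  p.insertNth (α := fun _ => Fin (k + 1)) 0 (up τ)

/-- As `ins1`, and append one more smallest letter. -/
def ins2 {n k : ℕ} (p : Fin (n + 1)) (τ : Fin n → Fin k) : Fin (n + 2) → Fin (k + 1) :=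
  Fin.snoc (α := fun _ => Fin (k + 1)) (ins1 p τ) 0

@[simp] lemma ins1_same {n k : ℕ} (p : Fin (n + 1)) (τ : Fin n → Fin k) : ins1 p τ p = 0 := by
  simp [ins1]

@[simp] lemma ins1_above {n k : ℕ} (p : Fin (n + 1)) (τ : Fin n → Fin k) (i : Fin n) :
    ins1 p τ (p.succAbove i) = (τ i).succ := by
  simp [ins1, up]

@[simp] lemma ins2_last {n k : ℕ} (p : Fin (n + 1)) (τ : Fin n → Fin k) :
    ins2 p τ (Fin.last _) = 0 := by
  simp [ins2]

@[simp] lemma ins2_cast {n k : ℕ} (p : Fin (n + 1)) (τ : Fin n → Fin k) (i : Fin (n + 1)) :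
    ins2 p τ i.castSucc = ins1 p τ i := by
  simp [ins2]

lemma up_inj {n k : ℕ} : Function.Injective (up : (Fin n → Fin k) → _) := by
  intro a b h
  funext i
  exact Fin.succ_injective _ (congrFun h i)

lemma ins1_zero {n k : ℕ} (p : Fin (n + 1)) (τ : Fin n → Fin k) (i : Fin (n + 1)) :
    ins1 p τ i = 0 ↔ i = p := by
  rcases Fin.eq_self_or_eq_succAbove p i with rfl | ⟨j, rfl⟩
  · simp
  · simp [Fin.succ_ne_zero, Fin.succAbove_ne]

lemma ins1_inj {n k : ℕ} {p q : Fin (n + 1)} {τ υ : Fin n → Fin k} (h : ins1 p τ = ins1 q υ) :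
    p = q ∧ τ = υ := by
  have hp : p = q := by
    rw [← ins1_zero q υ, ← h, ins1_same]
  subst hp
  refine ⟨rfl, ?_⟩
  funext i
  have := congrFun h (p.succAbove i)
  simpa using this

lemma ins2_inj {n k : ℕ} {p q : Fin (n + 1)} {τ υ : Fin n → Fin k} (h : ins2 p τ = ins2 q υ) :
    p = q ∧ τ = υ := by
  apply ins1_inj
  funext i
  simpa using congrFun h i.castSucc

lemma good_up {n k : ℕ} {τ : Fin n → Fin k} : GoodWord (up τ) ↔ GoodWord τ := by
  simp [GoodWord, up]

lemma good_ins1 {n k : ℕ} {p : Fin (n + 1)} {τ : Fin n → Fin k} :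
    GoodWord (ins1 p τ) ↔ GoodWord τ := by
  constructor
  · intro h i j l hij hjl e
    have := h (p.succAbove i) (p.succAbove j) (p.succAbove l)
      (Fin.strictMono_succAbove p hij) (Fin.strictMono_succAbove p hjl) (by simp [e])
    simpa using this
  · intro h i j l hij hjl e
    rcases Fin.eq_self_or_eq_succAbove p i with rfl | ⟨i, rfl⟩
    · rw [ins1_same, eq_comm, ins1_zero] at e
      exact absurd e hij.ne'
    rcases Fin.eq_self_or_eq_succAbove p j with rfl | ⟨j, rfl⟩
    · rw [ins1_same, ins1_zero] at e
      exact absurd e hij.ne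
    rcases Fin.eq_self_or_eq_succAbove p l with rfl | ⟨l, rfl⟩
    · simp
    · simp only [ins1_above, Fin.succ_lt_succ_iff, Fin.succ_inj] at *
      exact h i j l ((Fin.strictMono_succAbove p).lt_iff_lt.1 hij)
        ((Fin.strictMono_succAbove p).lt_iff_lt.1 hjl) e

lemma good_ins2 {n k : ℕ} {p : Fin (n + 1)} {τ : Fin n → Fin k} :
    GoodWord (ins2 p τ) ↔ GoodWord τ := by
  rw [← good_ins1 (p := p)]
  constructor
  · intro h i j l hij hjl e
    simpa using h i.castSucc j.castSucc l.castSucc (by simpa) (by simpa) (by simpa)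
  · intro h i j l hij hjl e
    induction j using Fin.lastCases with
    | last => exact absurd hjl (Fin.le_last l).not_gt
    | cast j =>
    induction i using Fin.lastCases with
    | last => exact absurd (hij.trans hjl) (Fin.le_last l).not_gt
    | cast i =>
    simp only [ins2_cast, Fin.castSucc_lt_castSucc_iff] at *
    induction l using Fin.lastCases with
    | last =>
      rw [ins2_last, Fin.pos_iff_ne_zero]
      intro h0
      have h1 := (ins1_zero p τ i).1 h0
      have h2 := (ins1_zero p τ j).1 (e ▸ h0)
      exact hij.ne (h1.trans h2.symm)
    | cast l =>
      simp only [ins2_cast, Fin.castSucc_lt_castSucc_iff] at *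
      exact h i j l hij hjl e

lemma exists_up {n k : ℕ} (σ : Fin n → Fin (k + 1)) (h : ∀ i, σ i ≠ 0) : ∃ τ, up τ = σ :=
  ⟨fun i => (σ i).pred (h i), by funext i; simp [up]⟩

lemma exists_ins1 {n k : ℕ} (σ : Fin (n + 1) → Fin (k + 1)) (p : Fin (n + 1)) (hp : σ p = 0)
    (h : ∀ i, i ≠ p → σ i ≠ 0) : ∃ τ, ins1 p τ = σ := by
  refine ⟨fun i => (σ (p.succAbove i)).pred (h _ (Fin.succAbove_ne p i)), ?_⟩
  funext i
  rcases Fin.eq_self_or_eq_succAbove p i with rfl | ⟨j, rfl⟩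
  · simp [hp]
  · simp

/-- The decomposition map. -/
def build (n k : ℕ) : GW (n + 2) k ⊕ (Fin (n + 2) × GW (n + 1) k) ⊕ (Fin (n + 1) × GW n k) →
    GW (n + 2) (k + 1)
  | .inl τ => ⟨up τ.1, good_up.2 τ.2⟩
  | .inr (.inl (p, τ)) => ⟨ins1 p τ.1, good_ins1.2 τ.2⟩
  | .inr (.inr (p, τ)) => ⟨ins2 p τ.1, good_ins2.2 τ.2⟩

lemma up_ne_ins1 {n k : ℕ} (τ : Fin (n + 1) → Fin k) (p : Fin (n + 1)) (υ : Fin n → Fin k) :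
    up τ ≠ ins1 p υ := by
  intro h
  have := congrFun h p
  rw [ins1_same] at this
  exact Fin.succ_ne_zero _ this

lemma up_ne_ins2 {n k : ℕ} (τ : Fin (n + 2) → Fin k) (p : Fin (n + 1)) (υ : Fin n → Fin k) :
    up τ ≠ ins2 p υ := by
  intro h
  have := congrFun h (Fin.last _)
  rw [ins2_last] at this
  exact Fin.succ_ne_zero _ this

lemma ins1_ne_ins2 {n k : ℕ} (q : Fin (n + 2)) (τ : Fin (n + 1) → Fin k) (p : Fin (n + 1))
    (υ : Fin n → Fin k) : ins1 q τ ≠ ins2 p υ := by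
  intro h
  have h1 := congrFun h (Fin.last _)
  have h2 := congrFun h p.castSucc
  rw [ins2_last, ins1_zero] at h1
  rw [ins2_cast, ins1_same, ins1_zero] at h2
  exact (Fin.castSucc_lt_last p).ne (h2.trans h1.symm)

lemma build_inj (n k : ℕ) : Function.Injective (build n k) := by
  rintro (τ | ⟨p, τ⟩ | ⟨p, τ⟩) (υ | ⟨q, υ⟩ | ⟨q, υ⟩) h <;>
    replace h := congrArg Subtype.val h <;> dsimp only [build] at h
  · rw [Subtype.ext (up_inj h)]
  · exact absurd h (up_ne_ins1 _ _ _)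
  · exact absurd h (up_ne_ins2 _ _ _)
  · exact absurd h.symm (up_ne_ins1 _ _ _)
  · obtain ⟨h1, h2⟩ := ins1_inj h
    rw [h1, Subtype.ext h2]
  · exact absurd h (ins1_ne_ins2 _ _ _ _)
  · exact absurd h.symm (up_ne_ins2 _ _ _)
  · exact absurd h.symm (ins1_ne_ins2 _ _ _ _)
  · obtain ⟨h1, h2⟩ := ins2_inj h
    rw [h1, Subtype.ext h2]

lemma two_zeros {n k : ℕ} {σ : Fin (n + 1) → Fin (k + 1)} (h : GoodWord σ) {i j : Fin (n + 1)}
    (hij : i < j) (hi : σ i = 0) (hj : σ j = 0) : j = Fin.last n := by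
  by_contra hl
  have := h i j (Fin.last n) hij (Fin.lt_last_iff_ne_last.2 hl) (hi.trans hj.symm)
  rw [hi] at this
  exact absurd this (Fin.not_lt_zero _)

lemma build_surj (n k : ℕ) : Function.Surjective (build n k) := by
  rintro ⟨σ, hσ⟩
  by_cases h0 : ∀ i, σ i ≠ 0
  · obtain ⟨τ, rfl⟩ := exists_up σ h0
    exact ⟨.inl ⟨τ, good_up.1 hσ⟩, rfl⟩
  by_cases h1 : ∃ p, σ p = 0 ∧ ∀ i, i ≠ p → σ i ≠ 0
  · obtain ⟨p, hp, h⟩ := h1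
    obtain ⟨τ, rfl⟩ := exists_ins1 σ p hp h
    exact ⟨.inr (.inl (p, ⟨τ, good_ins1.1 hσ⟩)), rfl⟩
  push Not at h0 h1
  obtain ⟨a, ha⟩ := h0
  obtain ⟨b, hb, hb0⟩ := h1 a ha
  have key : ∃ p : Fin (n + 1), σ p.castSucc = 0 ∧ σ (Fin.last _) = 0 := by
    rcases lt_or_gt_of_ne hb with hlt | hlt
    · have e := two_zeros hσ hlt hb0 ha
      subst e
      exact ⟨b.castPred hlt.ne, by simpa using hb0, ha⟩
    · have e := two_zeros hσ hlt ha hb0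
      subst e
      exact ⟨a.castPred hlt.ne, by simpa using ha, hb0⟩
  obtain ⟨p, hp, hl⟩ := key
  obtain ⟨τ, hτ⟩ := exists_ins1 (fun i : Fin (n + 1) => σ i.castSucc) p hp (by
    intro i hi hi0
    rcases lt_or_gt_of_ne hi with hlt | hlt
    · exact (Fin.castSucc_lt_last p).ne (two_zeros hσ (Fin.castSucc_lt_castSucc_iff.2 hlt) hi0 hp)
    · exact (Fin.castSucc_lt_last i).ne (two_zeros hσ (Fin.castSucc_lt_castSucc_iff.2 hlt) hp hi0))
  have e : ins2 p τ = σ := by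
    funext i
    induction i using Fin.lastCases with
    | last => simp [hl]
    | cast i => rw [ins2_cast, hτ]
  subst e
  exact ⟨.inr (.inr (p, ⟨τ, good_ins2.1 hσ⟩)), rfl⟩

/-- f_{111,112}(n,k) = f_{111,112}(n,k-1) + n·f_{111,112}(n-1,k-1) + (n-1)·f_{111,112}(n-2,k-1)
for n ≥ 2, k ≥ 1. -/
theorem avoid_111_112_recurrence (n k : ℕ) (hn : 2 ≤ n) (hk : 1 ≤ k) :
    avoiders n k {[1, 1, 1], [1, 1, 2]} =
      avoiders n (k - 1) {[1, 1, 1], [1, 1, 2]} +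
        n * avoiders (n - 1) (k - 1) {[1, 1, 1], [1, 1, 2]} +
        (n - 1) * avoiders (n - 2) (k - 1) {[1, 1, 1], [1, 1, 2]} := by
  obtain ⟨m, rfl⟩ := Nat.exists_eq_add_of_le' hn
  obtain ⟨l, rfl⟩ := Nat.exists_eq_add_of_le' hk
  simp only [avoiders_eq_s10, Nat.add_sub_cancel, show m + 2 - 1 = m + 1 from rfl]
  rw [← Nat.card_eq_of_bijective _ ⟨build_inj m l, build_surj m l⟩]
  simp only [Nat.card_sum, Nat.card_prod, Nat.card_fin, add_assoc]
end

section
/- Let v_{m,l} denote the pattern on the alphabet {1,2} consisting of m copies of 1, followed by one 2, followed by l copies of 1. For all integers m, l ≥ 0 with m+l ≥ 1, and all integers n ≥ 1 and k ≥ 1, f_{v_{m,l}}(n+1,k) - f_{v_{m,l}}(n,k) = ∑_{j=0}^{m+l-1} C(n,j) · f_{v_{m,l}}(n+1-j, k-1). -/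
/-- The pattern v_{m,l} = 1^m 2 1^l. -/
def vPattern (m l : ℕ) : List ℕ :=
  List.replicate m 1 ++ 2 :: List.replicate l 1

/-- The pattern `a^m b a^l`. -/
def vpat (m l a b : ℕ) : List ℕ := List.replicate m a ++ b :: List.replicate l a

/-- The Boolean pattern of minimal letters. -/
def BadB (m l : ℕ) (w : List Bool) : Prop :=
  (List.replicate m true ++ false :: List.replicate l true).Sublist w

def AvL (m l : ℕ) (w : List ℕ) : Prop := ∀ a b, a < b → ¬ (vpat m l a b).Sublist w

def restL (w : List ℕ) : List ℕ := (w.filter (fun x => !(x == 0))).map Nat.pred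

/-- Sum of `h` over all words of length `n` over `{0, ..., k-1}`. -/
def wsum (k : ℕ) : ℕ → (List ℕ → ℕ) → ℕ
  | 0, h => h []
  | n + 1, h => ∑ a ∈ Finset.range k, wsum k n (fun w => h (a :: w))

def bsum : ℕ → (List Bool → ℕ) → ℕ
  | 0, h => h []
  | n + 1, h => bsum n (fun w => h (true :: w)) + bsum n (fun w => h (false :: w))

theorem bsum_sum (s : Finset ℕ) (n : ℕ) (h : ℕ → List Bool → ℕ) :
    ∑ a ∈ s, bsum n (h a) = bsum n (fun w => ∑ a ∈ s, h a w) := by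
  induction n generalizing h with
  | zero => simp [bsum]
  | succ n ih => simp only [bsum, Finset.sum_add_distrib, ih]

theorem wsum_zero (k n : ℕ) : wsum k n (fun _ => 0) = 0 := by
  induction n with
  | zero => simp [wsum]
  | succ n ih => simp [wsum, ih]

theorem wsum_split (k n : ℕ) (G : List Bool → List ℕ → ℕ) :
    wsum (k + 1) n (fun w => G (w.map (fun x => x == 0)) (restL w)) =
      bsum n (fun b => wsum k (b.count false) (G b)) := by
  induction n generalizing G with
  | zero => simp [wsum, bsum, restL]
  | succ n ih =>
    rw [wsum, Finset.sum_range_succ', add_comm, bsum]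
    congr 1
    · have := ih (fun b u => G (true :: b) u)
      simpa [restL] using this
    · have := fun c => ih (fun b u => G (false :: b) (c :: u))
      simp only [restL] at this
      simp only [restL, List.map_cons, List.filter_cons]
      simp [this, bsum_sum, wsum]

theorem bool_preimage (m l : ℕ) (u : List ℕ)
    (h : u.map (fun x => x == 0) = List.replicate m true ++ false :: List.replicate l true) :
    ∃ b, 0 < b ∧ u = vpat m l 0 b := by
  obtain ⟨u1, u2, rfl, h1, h2⟩ := List.map_eq_append_iff.1 h
  obtain ⟨b, u3, rfl, h3, h4⟩ := List.map_eq_cons_iff.1 h2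
  refine ⟨b, by simp at h3; omega, ?_⟩
  have key : ∀ (j : ℕ) (v : List ℕ), v.map (fun x => x == 0) = List.replicate j true →
      v = List.replicate j 0 := by
    intro j v hv
    rw [List.eq_replicate_iff] at hv ⊢
    refine ⟨by simpa using hv.1, fun x hx => ?_⟩
    have := hv.2 (x == 0) (List.mem_map.2 ⟨x, hx, rfl⟩)
    simpa using this
  rw [vpat, key _ _ h1, key _ _ h4]

theorem avL_iff (m l : ℕ) (w : List ℕ) :
    AvL m l w ↔ ¬ BadB m l (w.map (fun x => x == 0)) ∧ AvL m l (restL w) := by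
  constructor
  · intro h
    constructor
    · intro hb
      obtain ⟨u, hu, he⟩ := List.sublist_map_iff.1 hb
      obtain ⟨b, hb, rfl⟩ := bool_preimage m l u he.symm
      exact h 0 b hb hu
    · intro a b hab hs
      refine h (a + 1) (b + 1) (by omega) ?_
      have h1 := hs.map Nat.succ
      have h2 : (restL w).map Nat.succ = w.filter (fun x => !(x == 0)) := by
        rw [restL, List.map_map]
        conv_rhs => rw [← List.map_id (w.filter (fun x => !(x == 0)))]
        apply List.map_congr_left
        intro x hx
        simp at hx
        simp; omega
      rw [h2] at h1
      have h3 := h1.trans List.filter_sublist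
      simpa [vpat] using h3
  · rintro ⟨h1, h2⟩ a b hab hs
    rcases a with _ | a
    · apply h1
      have := hs.map (fun x => x == 0)
      have hb : (b == 0) = false := by simp; omega
      simpa [vpat, BadB, hb] using this
    · obtain ⟨b, rfl⟩ : ∃ c, b = c + 1 := ⟨b - 1, by omega⟩
      apply h2 a b (by omega)
      have := (hs.filter (fun x => !(x == 0))).map Nat.pred
      simpa [vpat, restL] using this

open Classical in
noncomputable def fL (m l k n : ℕ) : ℕ := wsum k n (fun w => if AvL m l w then 1 else 0)

open Classical in
noncomputable def dsum (m l n : ℕ) (g : ℕ → ℕ) : ℕ :=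
  bsum n (fun b => if BadB m l b then 0 else g (b.count false))

theorem fL_succ (m l k n : ℕ) : fL m l (k + 1) n = dsum m l n (fL m l k) := by
  classical
  have := wsum_split k n (fun b u => if BadB m l b then 0 else if AvL m l u then 1 else 0)
  rw [fL, dsum]
  convert this using 3 with w b
  · rw [avL_iff]; split_ifs <;> simp_all
  · split_ifs
    · simp [wsum_zero]
    · rfl

theorem badB_succ_true (m l : ℕ) (b : List Bool) : BadB (m + 1) l (true :: b) ↔ BadB m l b := by
  simp [BadB, List.replicate_succ]

theorem badB_succ_false (m l : ℕ) (b : List Bool) :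
    BadB (m + 1) l (false :: b) ↔ BadB (m + 1) l b := by
  simp [BadB, List.replicate_succ, List.sublist_cons_iff]

theorem badB_zero_true (l : ℕ) (b : List Bool) : BadB 0 l (true :: b) ↔ BadB 0 l b := by
  simp [BadB, List.sublist_cons_iff]

theorem badB_zero_false (l : ℕ) (b : List Bool) : BadB 0 l (false :: b) ↔ l ≤ b.count true := by
  simp [BadB, List.replicate_sublist_iff]

theorem bsum_count (l n : ℕ) (g : ℕ → ℕ) :
    bsum n (fun b => if l ≤ b.count true then 0 else g (b.count false)) =
      ∑ j ∈ Finset.range l, n.choose j * g (n - j) := by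
  induction n generalizing l g with
  | zero =>
    rcases l with _ | l
    · simp [bsum]
    · simp [bsum, Finset.sum_range_succ']
  | succ n ih =>
    rw [bsum]
    rcases l with _ | l
    · have := ih 0 g
      have h2 := ih 0 (fun x => g (x + 1))
      simp_all
    · have h1 := ih l g
      have h2 := ih (l + 1) (fun x => g (x + 1))
      simp only [List.count_cons_self, add_le_add_iff_right, ne_eq, reduceCtorEq,
        not_false_eq_true, List.count_cons_of_ne, Bool.true_eq_false, Bool.false_eq_true] at h1 h2 ⊢
      rw [h1, h2, Finset.sum_range_succ', Finset.sum_range_succ' _ l, ← add_assoc,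
        ← Finset.sum_add_distrib]
      congr 1
      · apply Finset.sum_congr rfl
        intro j _
        rw [Nat.choose_succ_succ, add_mul, Nat.add_sub_add_right]
        congr 1
        by_cases hj : j + 1 ≤ n
        · rw [show n - (j + 1) + 1 = n - j by omega]
        · rw [Nat.choose_eq_zero_of_lt (by omega)]; simp
      · simp

theorem dsum_zero_len (m l : ℕ) (g : ℕ → ℕ) : dsum m l 0 g = g 0 := by
  simp [dsum, bsum, BadB]

theorem dsum_succ (m l n : ℕ) (g : ℕ → ℕ) :
    dsum (m + 1) l (n + 1) g = dsum m l n g + dsum (m + 1) l n (fun x => g (x + 1)) := by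
  classical
  unfold dsum
  rw [bsum]
  congr 2 <;> funext b
  · exact if_congr (badB_succ_true m l b) rfl (by simp)
  · exact if_congr (badB_succ_false m l b) rfl (by simp)

theorem dsum_zero (l n : ℕ) (g : ℕ → ℕ) :
    dsum 0 l (n + 1) g = dsum 0 l n g + ∑ j ∈ Finset.range l, n.choose j * g (n + 1 - j) := by
  have := bsum_count l n (fun x => g (x + 1))
  have h2 : ∑ j ∈ Finset.range l, n.choose j * g (n + 1 - j) =
      ∑ j ∈ Finset.range l, n.choose j * g (n - j + 1) := by
    apply Finset.sum_congr rfl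
    intro j _
    by_cases hj : j ≤ n
    · rw [show n - j + 1 = n + 1 - j by omega]
    · rw [Nat.choose_eq_zero_of_lt (by omega)]; simp
  rw [h2, ← this]
  classical
  unfold dsum
  rw [bsum]
  congr 2 <;> funext b
  · exact if_congr (badB_zero_true l b) rfl (by simp)
  · exact if_congr (badB_zero_false l b) rfl (by simp)

theorem dsum_rec (m l n : ℕ) (g : ℕ → ℕ) :
    dsum m l (n + 1) g = dsum m l n g +
      ∑ j ∈ Finset.range (m + l), n.choose j * g (n + 1 - j) := by
  induction m generalizing n g with
  | zero => simpa using dsum_zero l n g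
  | succ m ihm =>
    induction n generalizing g with
    | zero =>
      rw [dsum_succ, show m + 1 + l = (m + l) + 1 by omega, Finset.sum_range_succ']
      simp [dsum_zero_len]
    | succ n ihn =>
      rw [dsum_succ, ihm, ihn, dsum_succ, show m + 1 + l = (m + l) + 1 by omega]
      have : ∑ j ∈ Finset.range (m + l + 1), (n + 1).choose j * g (n + 1 + 1 - j) =
          ∑ j ∈ Finset.range (m + l), n.choose j * g (n + 1 - j) +
          ∑ j ∈ Finset.range (m + l + 1), n.choose j * g (n + 1 - j + 1) := by
        rw [Finset.sum_range_succ', Finset.sum_range_succ' _ (m + l), ← add_assoc,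
          ← Finset.sum_add_distrib]
        congr 1
        · apply Finset.sum_congr rfl
          intro j _
          rw [Nat.choose_succ_succ, add_mul, Nat.add_sub_add_right]
          congr 1
          by_cases hj : j + 1 ≤ n
          · rw [show n + 1 - (j + 1) + 1 = n + 1 - j by omega]
          · rw [Nat.choose_eq_zero_of_lt (by omega)]; simp
        · simp
      rw [this]
      ring

theorem vpat_eq_map (m l a b : ℕ) :
    vpat m l a b = (vPattern m l).map (fun t => if t = 1 then a else b) := by
  simp [vpat, vPattern]

theorem vPattern_get (m l : ℕ) (i : Fin (vPattern m l).length) :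
    (vPattern m l).get i = 1 ∨ (vPattern m l).get i = 2 := by
  have := List.get_mem (vPattern m l) i
  generalize (vPattern m l).get i = t at this
  simp [vPattern] at this
  omega

theorem contains_iff_s18 (m l n k : ℕ) (hml : 1 ≤ m + l) (σ : Fin n → Fin k) :
    ¬ WordContains σ (vPattern m l) ↔ AvL m l (List.ofFn (fun i => (σ i : ℕ))) := by
  have hrep : AvL m l (List.ofFn (fun i => (σ i : ℕ))) ↔
      ¬ ∃ a b, a < b ∧ (vpat m l a b).Sublist (List.ofFn (fun i => (σ i : ℕ))) := by
    simp [AvL]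
  rw [hrep, not_iff_not]
  constructor
  · rintro ⟨f, hf, h⟩
    obtain ⟨p, hp⟩ : ∃ p, (vPattern m l).get p = 2 := by
      apply List.mem_iff_get.1; simp [vPattern]
    obtain ⟨q, hq⟩ : ∃ q, (vPattern m l).get q = 1 := by
      apply List.mem_iff_get.1; simp [vPattern]; omega
    refine ⟨σ (f q), σ (f p), ?_, ?_⟩
    · exact (h q p).1.2 (by omega)
    · rw [vpat_eq_map, List.sublist_iff_exists_fin_orderEmbedding_get_eq]
      refine ⟨OrderEmbedding.ofStrictMono
        (fun i => Fin.cast (by simp) (f (Fin.cast (by simp) i))) ?_, ?_⟩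
      · intro i j hij
        exact hf (show Fin.cast _ i < Fin.cast _ j from hij)
      · intro i
        have hi := vPattern_get m l (Fin.cast (by simp) i)
        simp only [List.get_eq_getElem, List.getElem_map, OrderEmbedding.coe_ofStrictMono,
          List.getElem_ofFn]
        rcases hi with hi | hi
        · have := (h (Fin.cast (by simp) i) q).2.2 (by rw [hi, hq])
          simp at hi
          rw [if_pos hi]; exact congrArg Fin.val this.symm
        · have := (h (Fin.cast (by simp) i) p).2.2 (by rw [hi, hp])
          simp at hi
          rw [if_neg (by omega)]; exact congrArg Fin.val this.symm
  · rintro ⟨a, b, hab, hs⟩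
    rw [vpat_eq_map, List.sublist_iff_exists_fin_orderEmbedding_get_eq] at hs
    obtain ⟨f, hf⟩ := hs
    have key : ∀ i : Fin (vPattern m l).length,
        (σ (Fin.cast (by simp) (f (Fin.cast (by simp) i))) : ℕ) =
          if (vPattern m l).get i = 1 then a else b := by
      intro i
      have := hf (Fin.cast (by simp) i)
      simp only [List.get_eq_getElem, List.getElem_map, List.getElem_ofFn] at this
      exact this.symm
    refine ⟨fun i => Fin.cast (by simp) (f (Fin.cast (by simp) i)), ?_, ?_⟩
    · intro i j hij
      exact f.strictMono (show Fin.cast _ i < Fin.cast _ j from hij)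
    · intro i j
      have hi := key i
      have hj := key j
      rw [Fin.lt_def, Fin.ext_iff, hi, hj]
      rcases vPattern_get m l i with h1 | h1 <;> rcases vPattern_get m l j with h2 | h2 <;>
        simp only [h1, h2] <;> simp <;> omega

theorem sum_eq_wsum (k n : ℕ) (h : List ℕ → ℕ) :
    ∑ σ : Fin n → Fin k, h (List.ofFn (fun i => (σ i : ℕ))) = wsum k n h := by
  induction n generalizing h with
  | zero => simp [wsum]
  | succ n ih =>
    rw [← (Fin.consEquiv (fun _ : Fin (n + 1) => Fin k)).sum_comp, Fintype.sum_prod_type, wsum,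
      Finset.sum_range]
    apply Finset.sum_congr rfl
    intro a _
    rw [← ih]
    simp [Fin.consEquiv, List.ofFn_succ]

theorem avoiders_eq_s18 (m l n k : ℕ) (hml : 1 ≤ m + l) :
    avoiders n k {vPattern m l} = fL m l k n := by
  classical
  rw [avoiders, fL, ← sum_eq_wsum]
  simp only [Set.mem_singleton_iff, forall_eq, contains_iff_s18 m l n k hml]
  rw [Nat.card_eq_fintype_card, Fintype.card_subtype, Finset.card_filter]

/-- f_{v_{m,l}}(n+1,k) - f_{v_{m,l}}(n,k) = ∑_{j=0}^{m+l-1} C(n,j)·f_{v_{m,l}}(n+1-j,k-1)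
for m + l ≥ 1, n ≥ 1, k ≥ 1. -/
theorem avoid_vml_recurrence (m l n k : ℕ) (hml : 1 ≤ m + l) (hn : 1 ≤ n) (hk : 1 ≤ k) :
    (avoiders (n + 1) k {vPattern m l} : ℤ) - (avoiders n k {vPattern m l} : ℤ) =
      ((∑ j ∈ Finset.range (m + l),
        n.choose j * avoiders (n + 1 - j) (k - 1) {vPattern m l} : ℕ) : ℤ) := by
  obtain ⟨k, rfl⟩ : ∃ c, k = c + 1 := ⟨k - 1, by omega⟩
  simp only [avoiders_eq_s18 _ _ _ _ hml, Nat.add_sub_cancel]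
  rw [fL_succ, fL_succ, dsum_rec]
  push_cast
  ring
end

section
/- Let v_{m,l} denote the pattern on the alphabet {1,2} consisting of m copies of 1, followed by one 2, followed by l copies of 1. For all integers m, l ≥ 0 with m+l ≥ 1, and all integers n ≥ 0 and k ≥ 0, the number of words in [k]^n avoiding v_{m,l} equals the number of words in [k]^n avoiding v_{m+l,0}; in other words, all patterns v_{m,l} with the same value of m+l are Wilf-equivalent. -/
open Finset Classical in
/-- counting form of containment of `1^m 2 1^l` -/
def VBad {α : Type} [LinearOrder α] [Fintype α] {k : ℕ} (m l : ℕ) (σ : α → Fin k) : Prop :=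
  ∃ i : α, ∃ a : Fin k, a < σ i ∧ m ≤ #{j : α | j < i ∧ σ j = a} ∧ l ≤ #{j : α | i < j ∧ σ j = a}

open Finset in
theorem wordContains_of_vbad {n k m l : ℕ} (σ : Fin n → Fin k) (h : VBad m l σ) :
    WordContains σ (vPattern m l) := by
  classical
  obtain ⟨i, a, ha, hm, hl⟩ := h
  obtain ⟨A, hA, hAc⟩ := Finset.exists_subset_card_eq hm
  obtain ⟨B, hB, hBc⟩ := Finset.exists_subset_card_eq hl
  have hA' : ∀ x, A.orderEmbOfFin hAc x < i ∧ σ (A.orderEmbOfFin hAc x) = a := fun x => by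
    simpa using hA (A.orderEmbOfFin_mem hAc x)
  have hB' : ∀ x, i < B.orderEmbOfFin hBc x ∧ σ (B.orderEmbOfFin hBc x) = a := fun x => by
    simpa using hB (B.orderEmbOfFin_mem hBc x)
  have hlen : (vPattern m l).length = m + l + 1 := by simp [vPattern]; omega
  let f : Fin (vPattern m l).length → Fin n := fun x =>
    if h1 : x.1 < m then A.orderEmbOfFin hAc ⟨x.1, h1⟩
    else if h2 : x.1 = m then i
    else B.orderEmbOfFin hBc ⟨x.1 - m - 1, by have := x.2; omega⟩
  have hσ : ∀ x, (x.1 = m ∧ f x = i ∧ (vPattern m l).get x = 2) ∨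
      (x.1 ≠ m ∧ σ (f x) = a ∧ (vPattern m l).get x = 1) := by
    intro x
    rcases lt_trichotomy x.1 m with h1 | h1 | h1
    · right
      refine ⟨h1.ne, ?_, ?_⟩
      · simp only [f, h1, dif_pos]; exact (hA' _).2
      · rw [List.get_eq_getElem]; simp [vPattern, List.getElem_append, h1]
    · left
      refine ⟨h1, ?_, ?_⟩
      · simp [f, h1]
      · rw [List.get_eq_getElem]; simp [vPattern, List.getElem_append, h1]
    · right
      have h3 : ¬ x.1 < m := by omega
      refine ⟨h1.ne', ?_, ?_⟩
      · simp only [f, h3, h1.ne', dif_neg, not_false_eq_true]; exact (hB' _).2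
      · obtain ⟨d, hd⟩ : ∃ d, x.1 - m = d + 1 := ⟨x.1 - m - 1, by omega⟩
        rw [List.get_eq_getElem]; simp [vPattern, List.getElem_append, h3, hd]
  refine ⟨f, ?_, ?_⟩
  · intro x y hxy
    have hxy' : x.1 < y.1 := hxy
    simp only [f]
    split_ifs with h1 h2 h3 h4 h5 h6
    · exact (OrderEmbedding.lt_iff_lt _).2 (by simpa using hxy')
    · exact (hA' _).1
    · exact (hA' _).1.trans (hB' _).1
    · omega
    · omega
    · exact (hB' _).1
    · omega
    · omega
    · exact (OrderEmbedding.lt_iff_lt _).2 (by simp; omega)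
  · intro x y
    rcases hσ x with ⟨hx, hx1, hx2⟩ | ⟨hx, hx1, hx2⟩ <;>
    rcases hσ y with ⟨hy, hy1, hy2⟩ | ⟨hy, hy1, hy2⟩ <;> rw [hx1, hx2, hy1, hy2]
    · simp
    · simp [ha.ne', ha.le]
    · simp [ha, ha.ne]
    · simp

open Finset in
theorem vbad_of_wordContains {n k m l : ℕ} (hml : 1 ≤ m + l) (σ : Fin n → Fin k)
    (h : WordContains σ (vPattern m l)) : VBad m l σ := by
  classical
  obtain ⟨f, hf, hσ⟩ := h
  have hlen : (vPattern m l).length = m + l + 1 := by simp [vPattern]; omega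
  have hv : ∀ x : Fin (vPattern m l).length,
      (vPattern m l).get x = if x.1 = m then 2 else 1 := by
    intro x
    rcases lt_trichotomy x.1 m with h1 | h1 | h1
    · rw [List.get_eq_getElem]; simp [vPattern, List.getElem_append, h1, h1.ne]
    · rw [List.get_eq_getElem]; simp [vPattern, List.getElem_append, h1]
    · have h3 : ¬ x.1 < m := by omega
      obtain ⟨d, hd⟩ : ∃ d, x.1 - m = d + 1 := ⟨x.1 - m - 1, by omega⟩
      rw [List.get_eq_getElem]; simp [vPattern, List.getElem_append, h3, hd, h1.ne']
  let M : Fin (vPattern m l).length := ⟨m, by omega⟩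
  obtain ⟨z, hz⟩ : ∃ z : Fin (vPattern m l).length, z.1 ≠ m := by
    by_cases h0 : m = 0
    · exact ⟨⟨1, by omega⟩, by simp; omega⟩
    · exact ⟨⟨0, by omega⟩, by simp; omega⟩
  have heq : ∀ x : Fin (vPattern m l).length, x.1 ≠ m → σ (f x) = σ (f z) := by
    intro x hx
    rw [(hσ x z).2, hv, hv, if_neg hx, if_neg hz]
  refine ⟨f M, σ (f z), ?_, ?_, ?_⟩
  · rw [(hσ z M).1, hv, hv, if_neg hz, if_pos rfl]; norm_num
  · let g : Fin m → Fin n := fun x => f ⟨x.1, by omega⟩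
    have hg : Function.Injective g := by
      intro x y hxy
      have := hf.injective hxy
      simpa [Fin.ext_iff] using this
    calc m = #(univ.image g) := by rw [card_image_of_injective _ hg]; simp
      _ ≤ _ := by
        apply card_le_card
        intro y hy
        obtain ⟨x, -, rfl⟩ := mem_image.1 hy
        simp only [mem_filter, mem_univ, true_and]
        exact ⟨hf (show x.1 < m from x.2), heq _ (show x.1 ≠ m from x.2.ne)⟩
  · let g : Fin l → Fin n := fun x => f ⟨m + 1 + x.1, by omega⟩
    have hg : Function.Injective g := by
      intro x y hxy
      have := hf.injective hxy
      simpa [Fin.ext_iff] using this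
    calc l = #(univ.image g) := by rw [card_image_of_injective _ hg]; simp
      _ ≤ _ := by
        apply card_le_card
        intro y hy
        obtain ⟨x, -, rfl⟩ := mem_image.1 hy
        simp only [mem_filter, mem_univ, true_and]
        exact ⟨hf (show m < m + 1 + x.1 by omega), heq _ (show m + 1 + x.1 ≠ m by omega)⟩

open Finset in
theorem vbad_congr {α β : Type} [LinearOrder α] [Fintype α] [LinearOrder β] [Fintype β]
    (e : α ≃o β) {k m l : ℕ} (σ : β → Fin k) : VBad m l (σ ∘ e) ↔ VBad m l σ := by
  classical
  unfold VBad
  rw [← e.toEquiv.exists_congr_right]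
  refine exists_congr fun i => exists_congr fun a => ?_
  have h1 : #{j : α | j < i ∧ (σ ∘ e) j = a} = #{j : β | j < e.toEquiv i ∧ σ j = a} := by
    apply card_bij (fun j _ => e j)
    · intro j; simp
    · intro j _ j' _; simp
    · intro j hj
      exact ⟨e.symm j, by simpa [OrderIso.symm_apply_lt] using hj, by simp⟩
  have h2 : #{j : α | i < j ∧ (σ ∘ e) j = a} = #{j : β | e.toEquiv i < j ∧ σ j = a} := by
    apply card_bij (fun j _ => e j)
    · intro j; simp
    · intro j _ j' _; simp
    · intro j hj
      exact ⟨e.symm j, by simpa [OrderIso.lt_symm_apply] using hj, by simp⟩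
  rw [h1, h2]; rfl

/-- number of good words with positions in `α` -/
noncomputable def vcount (α : Type) [LinearOrder α] [Fintype α] (k m l : ℕ) : ℕ :=
  Nat.card {σ : α → Fin k // ¬ VBad m l σ}

theorem vcount_congr {α β : Type} [LinearOrder α] [Fintype α] [LinearOrder β] [Fintype β]
    (e : α ≃o β) (k m l : ℕ) : vcount β k m l = vcount α k m l := by
  apply Nat.card_congr
  refine Equiv.subtypeEquiv (Equiv.arrowCongr e.symm.toEquiv (Equiv.refl _)) fun σ => ?_
  rw [← vbad_congr e σ]; rfl

open Finset Classical in
/-- admissible sets of positions for the smallest letter -/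
def VGood {n : ℕ} (m l : ℕ) (S : Finset (Fin n)) : Prop :=
  ∀ i, i ∉ S → ¬ (m ≤ #{j ∈ S | j < i} ∧ l ≤ #{j ∈ S | i < j})

/-- words with a prescribed set of zeros -/
def zeroEquiv {n k : ℕ} (S : Finset (Fin n)) :
    {σ : Fin n → Fin (k + 1) // ∀ x, σ x = 0 ↔ x ∈ S} ≃ ({x : Fin n // x ∉ S} → Fin k) where
  toFun σ x := (σ.1 x.1).pred (fun h => x.2 ((σ.2 x.1).1 h))
  invFun τ := ⟨fun x => if h : x ∈ S then 0 else (τ ⟨x, h⟩).succ, by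
    intro x
    by_cases h : x ∈ S <;> simp [h]⟩
  left_inv σ := by
    ext x
    by_cases h : x ∈ S
    · simp [h, (σ.2 x).2 h]
    · simp [h]
  right_inv τ := by
    ext x
    simp [x.2]

open Finset in
theorem vbad_zero {n k m l : ℕ} (S : Finset (Fin n))
    (σ : {σ : Fin n → Fin (k + 1) // ∀ x, σ x = 0 ↔ x ∈ S}) :
    VBad m l σ.1 ↔ (¬ VGood m l S ∨ VBad m l (zeroEquiv S σ)) := by
  classical
  obtain ⟨σ, hσ⟩ := σ
  have hz : ∀ (x : {x : Fin n // x ∉ S}) (a : Fin k),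
      zeroEquiv S ⟨σ, hσ⟩ x = a ↔ σ x = a.succ := by
    intro x a
    simp only [zeroEquiv, Equiv.coe_fn_mk]
    rw [Fin.pred_eq_iff_eq_succ]
  have hlt : ∀ (x : {x : Fin n // x ∉ S}) (a : Fin k),
      a < zeroEquiv S ⟨σ, hσ⟩ x ↔ a.succ < σ x := by
    intro x a
    simp only [zeroEquiv, Equiv.coe_fn_mk]
    rw [Fin.lt_pred_iff]
  have hc1 : ∀ (i : {x : Fin n // x ∉ S}) (a : Fin k),
      #{j : {x : Fin n // x ∉ S} | j < i ∧ zeroEquiv S ⟨σ, hσ⟩ j = a}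
        = #{j : Fin n | j < i ∧ σ j = a.succ} := by
    intro i a
    apply card_bij (fun j _ => j.1)
    · intro j; simp [hz]
    · intro j _ j' _; exact Subtype.ext
    · intro j hj
      simp only [mem_filter, mem_univ, true_and] at hj
      have hjS : j ∉ S := by rw [← hσ, hj.2]; exact Fin.succ_ne_zero a
      exact ⟨⟨j, hjS⟩, by simpa [hz, ← Subtype.coe_lt_coe] using hj, rfl⟩
  have hc2 : ∀ (i : {x : Fin n // x ∉ S}) (a : Fin k),
      #{j : {x : Fin n // x ∉ S} | i < j ∧ zeroEquiv S ⟨σ, hσ⟩ j = a}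
        = #{j : Fin n | i < j ∧ σ j = a.succ} := by
    intro i a
    apply card_bij (fun j _ => j.1)
    · intro j; simp [hz]
    · intro j _ j' _; exact Subtype.ext
    · intro j hj
      simp only [mem_filter, mem_univ, true_and] at hj
      have hjS : j ∉ S := by rw [← hσ, hj.2]; exact Fin.succ_ne_zero a
      exact ⟨⟨j, hjS⟩, by simpa [hz, ← Subtype.coe_lt_coe] using hj, rfl⟩
  have hs1 : ∀ i : Fin n, #{j : Fin n | j < i ∧ σ j = 0} = #{j ∈ S | j < i} := by
    intro i; congr 1; ext j; simp [hσ, and_comm]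
  have hs2 : ∀ i : Fin n, #{j : Fin n | i < j ∧ σ j = 0} = #{j ∈ S | i < j} := by
    intro i; congr 1; ext j; simp [hσ, and_comm]
  constructor
  · rintro ⟨i, a, ha, hm, hl⟩
    have hi : i ∉ S := by
      rw [← hσ]; intro h0; simp only [h0] at ha; exact absurd ha (Fin.not_lt_zero a)
    refine Fin.cases (fun ha hm hl => ?_) (fun a ha hm hl => ?_) a ha hm hl
    · left
      intro hg
      exact hg i hi ⟨by rw [← hs1]; convert hm, by rw [← hs2]; convert hl⟩
    · right
      refine ⟨⟨i, hi⟩, a, (hlt _ _).2 ha, ?_, ?_⟩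
      · refine le_trans hm (le_of_eq ?_); rw [← hc1 ⟨i, hi⟩ a]
      · refine le_trans hl (le_of_eq ?_); rw [← hc2 ⟨i, hi⟩ a]
  · rintro (h | ⟨i, a, ha, hm, hl⟩)
    · unfold VGood at h
      push Not at h
      obtain ⟨i, hi, hm, hl⟩ := h
      refine ⟨i, 0, Fin.pos_iff_ne_zero.2 fun h0 => hi ((hσ i).1 h0), ?_, ?_⟩
      · simp only [hs1]; convert hm
      · simp only [hs2]; convert hl
    · refine ⟨i.1, a.succ, (hlt _ _).1 ha, ?_, ?_⟩
      · refine le_trans hm (le_of_eq ?_); rw [← hc1 i a]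
      · refine le_trans hl (le_of_eq ?_); rw [← hc2 i a]

open Finset Classical in
theorem vcount_succ (n k m l : ℕ) :
    vcount (Fin n) (k + 1) m l =
      ∑ S : Finset (Fin n) with VGood m l S, vcount (Fin (n - #S)) k m l := by
  have h1 : vcount (Fin n) (k + 1) m l =
      ∑ S : Finset (Fin n), #{σ : Fin n → Fin (k + 1) | ¬ VBad m l σ ∧ ∀ x, σ x = 0 ↔ x ∈ S} := by
    unfold vcount
    rw [Nat.card_eq_fintype_card, Fintype.card_subtype]
    rw [card_eq_sum_card_fiberwise (f := fun σ : Fin n → Fin (k + 1) => ({x | σ x = 0} : Finset _))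
      (t := univ) (by simp)]
    refine sum_congr rfl fun S _ => ?_
    congr 1
    ext σ
    simp [Finset.ext_iff]
  rw [h1, sum_filter]
  refine sum_congr rfl fun S _ => ?_
  split_ifs with hS
  · have hcard : Fintype.card {x : Fin n // x ∉ S} = n - #S := by
      rw [Fintype.card_subtype_compl]; simp
    have e := (Fintype.orderIsoFinOfCardEq {x : Fin n // x ∉ S} hcard)
    rw [← vcount_congr e]
    unfold vcount
    rw [← Fintype.card_subtype, ← Nat.card_eq_fintype_card]
    apply Nat.card_congr
    refine Equiv.trans (Equiv.subtypeEquivRight fun σ => and_comm) ?_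
    refine Equiv.trans (Equiv.subtypeSubtypeEquivSubtypeInter
      (fun σ : Fin n → Fin (k + 1) => ∀ x, σ x = 0 ↔ x ∈ S) (fun σ => ¬ VBad m l σ)).symm ?_
    refine Equiv.subtypeEquiv (zeroEquiv S) fun σ => ?_
    rw [vbad_zero]
    simp [hS]
  · rw [card_eq_zero, filter_eq_empty_iff]
    rintro σ - ⟨h, h'⟩
    exact h ((vbad_zero S ⟨σ, h'⟩).2 (Or.inl hS))

open Finset in
theorem vgood_rev {n m l : ℕ} (S : Finset (Fin n)) (h : VGood m l S) :
    VGood l m (S.map Fin.revPerm.toEmbedding) := by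
  classical
  intro i hi
  have hi' : i.rev ∉ S := fun h' => hi (by simpa using h')
  have := h _ hi'
  rintro ⟨h1, h2⟩
  refine this ⟨h2.trans (le_of_eq ?_), h1.trans (le_of_eq ?_)⟩
  · rw [filter_map, card_map]
    congr 1; ext j; simp [Fin.lt_rev_iff]
  · rw [filter_map, card_map]
    congr 1; ext j; simp [Fin.rev_lt_iff]

/-- reflect the positions below `M` -/
def reflFun {n : ℕ} (M x : Fin n) : Fin n :=
  if x < M then ⟨M.1 - 1 - x.1, by omega⟩ else x

theorem reflFun_invol {n : ℕ} (M : Fin n) : Function.Involutive (reflFun M) := by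
  intro x
  unfold reflFun
  ext
  simp only [Fin.lt_def]
  split_ifs <;> simp_all <;> omega

open Finset Classical in
/-- reflect a set below its maximum -/
noncomputable def phi {n : ℕ} (S : Finset (Fin n)) : Finset (Fin n) :=
  if h : S.Nonempty then S.image (reflFun (S.max' h)) else S

open Finset Classical in
theorem phi_eq {n : ℕ} (S : Finset (Fin n)) (M : Fin n) (hM : M ∈ S) (hle : ∀ x ∈ S, x ≤ M) :
    phi S = S.image (reflFun M) := by
  have hne : S.Nonempty := ⟨M, hM⟩
  have : S.max' hne = M := le_antisymm (hle _ (S.max'_mem hne)) (S.le_max' _ hM)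
  rw [phi, dif_pos hne, this]

open Finset in
theorem phi_card {n : ℕ} (S : Finset (Fin n)) : #(phi S) = #S := by
  classical
  unfold phi
  split_ifs with h
  · exact card_image_of_injective _ (reflFun_invol _).injective
  · rfl

open Finset in
theorem phi_phi {n : ℕ} (S : Finset (Fin n)) : phi (phi S) = S := by
  classical
  by_cases h : S.Nonempty
  · have hM := S.max'_mem h
    have hle : ∀ x ∈ S, x ≤ S.max' h := fun x hx => S.le_max' x hx
    generalize S.max' h = M at hM hle
    rw [phi_eq S M hM hle, phi_eq _ M, image_image, (reflFun_invol M).comp_self, image_id]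
    · exact mem_image.2 ⟨M, hM, by simp [reflFun]⟩
    · intro x hx
      obtain ⟨y, hy, rfl⟩ := mem_image.1 hx
      have := hle y hy
      unfold reflFun
      split_ifs
      · simp only [Fin.le_def]; omega
      · exact this
  · simp [phi, h]

open Finset in
theorem vgood_phi {n m l : ℕ} (S : Finset (Fin n)) (hg : VGood m (l + 1) S) :
    VGood l (m + 1) (phi S) := by
  classical
  by_cases h : S.Nonempty
  · have hM := S.max'_mem h
    have hle : ∀ x ∈ S, x ≤ S.max' h := fun x hx => S.le_max' x hx
    generalize S.max' h = M at hM hle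
    rw [phi_eq S M hM hle]
    intro i hi
    have hinj := (reflFun_invol M).injective
    have hi' : reflFun M i ∉ S := fun h' => hi (mem_image.2 ⟨_, h', reflFun_invol M i⟩)
    have hg' := hg _ hi'
    rintro ⟨h1, h2⟩
    rw [filter_image, card_image_of_injective _ hinj] at h1 h2
    by_cases hiM : i < M
    · apply hg'
      have e1 : ({j ∈ S | i < reflFun M j} : Finset (Fin n))
          = insert M {j ∈ S | j < reflFun M i} := by
        ext j
        simp only [mem_filter, mem_insert]
        have hj := hle j
        unfold reflFun
        simp only [hiM, if_true]
        by_cases hjS : j ∈ S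
        · have := hj hjS
          simp only [hjS, true_and]
          split_ifs with hjM
          · simp only [Fin.lt_def, Fin.ext_iff] at *; omega
          · simp only [Fin.lt_def, Fin.le_def, Fin.ext_iff] at *; omega
        · simp only [hjS, false_and, or_false, false_iff]
          rintro rfl; exact hjS hM
      have e2 : ({j ∈ S | reflFun M i < j} : Finset (Fin n))
          = insert M {j ∈ S | reflFun M j < i} := by
        ext j
        simp only [mem_filter, mem_insert]
        have hj := hle j
        unfold reflFun
        simp only [hiM, if_true]
        by_cases hjS : j ∈ S
        · have := hj hjS
          simp only [hjS, true_and]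
          split_ifs with hjM
          · simp only [Fin.lt_def, Fin.ext_iff] at *; omega
          · simp only [Fin.lt_def, Fin.le_def, Fin.ext_iff] at *; omega
        · simp only [hjS, false_and, or_false, false_iff]
          rintro rfl; exact hjS hM
      constructor
      · rw [e1] at h2
        have := card_insert_le M ({j ∈ S | j < reflFun M i} : Finset (Fin n))
        have h3 : m ≤ #{j ∈ S | j < reflFun M i} := by omega
        convert h3
      · have h3 : l + 1 ≤ #{j ∈ S | reflFun M i < j} := by
          rw [e2, card_insert_of_notMem]
          · have h4 : l ≤ #{j ∈ S | reflFun M j < i} := by convert h1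
            omega
          · simp only [mem_filter, not_and]
            intro _
            simp only [reflFun, lt_irrefl, if_false]
            exact not_lt.2 hiM.le
        convert h3
    · have : ({j ∈ S | i < reflFun M j} : Finset (Fin n)) = ∅ := by
        rw [filter_eq_empty_iff]
        intro j hj hlt
        have := hle j hj
        unfold reflFun at hlt
        split_ifs at hlt <;> simp only [Fin.lt_def, Fin.le_def] at * <;> omega
      have h3 : m + 1 ≤ #({j ∈ S | i < reflFun M j} : Finset (Fin n)) := by convert h2
      rw [this] at h3
      simp at h3
  · have : phi S = S := by simp [phi, h]
    rw [this]
    rw [not_nonempty_iff_eq_empty] at h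
    subst h
    intro i _ ⟨_, h2⟩
    simp at h2

open Finset Classical in
theorem sum_good {n m l : ℕ} (g : ℕ → ℕ) :
    ∑ S : Finset (Fin n) with VGood m (l + 1) S, g #S =
      ∑ S : Finset (Fin n) with VGood (m + 1) l S, g #S := by
  have hrr : ∀ S : Finset (Fin n),
      (S.map Fin.revPerm.toEmbedding).map Fin.revPerm.toEmbedding = S := by
    intro S; ext x; simp
  refine sum_nbij' (fun S => (phi S).map Fin.revPerm.toEmbedding)
    (fun S => phi (S.map Fin.revPerm.toEmbedding)) ?_ ?_ ?_ ?_ ?_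
  · intro S hS
    simp only [mem_filter, mem_univ, true_and] at *
    exact vgood_rev _ (vgood_phi _ hS)
  · intro S hS
    simp only [mem_filter, mem_univ, true_and] at *
    exact vgood_phi _ (vgood_rev _ hS)
  · intro S _; simp only [hrr, phi_phi]
  · intro S _; simp only [hrr, phi_phi]
  · intro S _; rw [card_map, phi_card]

theorem vcount_shift (k : ℕ) : ∀ n m l : ℕ,
    vcount (Fin n) k m (l + 1) = vcount (Fin n) k (m + 1) l := by
  classical
  induction k with
  | zero =>
    intro n m l
    apply Nat.card_congr
    refine Equiv.subtypeEquivRight fun σ => ?_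
    constructor <;> rintro - ⟨_, a, _⟩ <;> exact a.elim0
  | succ k ih =>
    intro n m l
    rw [vcount_succ, vcount_succ]
    simp only [ih]
    exact sum_good (fun c => vcount (Fin (n - c)) k (m + 1) l)

theorem vcount_all (n k l : ℕ) : ∀ m : ℕ,
    vcount (Fin n) k m l = vcount (Fin n) k (m + l) 0 := by
  induction l with
  | zero => intro m; rfl
  | succ l ih => intro m; rw [vcount_shift, ih]; congr 1; omega

theorem avoiders_eq_vcount (m l n k : ℕ) (hml : 1 ≤ m + l) :
    avoiders n k {vPattern m l} = vcount (Fin n) k m l := by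
  apply Nat.card_congr
  refine Equiv.subtypeEquivRight fun σ => ?_
  simp only [Set.mem_singleton_iff, forall_eq]
  exact not_congr ⟨vbad_of_wordContains hml σ, wordContains_of_vbad σ⟩

/-- All patterns v_{m,l} with the same value of m + l are Wilf-equivalent:
f_{v_{m,l}}(n,k) = f_{v_{m+l,0}}(n,k). -/
theorem avoid_vml_wilf_equiv (m l n k : ℕ) (hml : 1 ≤ m + l) :
    avoiders n k {vPattern m l} = avoiders n k {vPattern (m + l) 0} := by
  rw [avoiders_eq_vcount m l n k hml, avoiders_eq_vcount (m + l) 0 n k (by simpa using hml)]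
  exact vcount_all n k l m
end
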